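/- arXiv:0908.3056 — 3 statements merged into one kernel-verified Lean document; each statement's English description precedes it below -/
import Mathlib

section
/- Let G be a finite group and n ≥ 1. For every linear character ξ of G, every linear character π of H_n, and every irreducible character ψ of SG_{2n}, the multiplicity ⟨Res_{HG_n} ψ, Θ_{ξ,π}⟩_{HG_n} = (1/|HG_n|)·∑_{h∈HG_n} ψ(h)·conj(Θ_{ξ,π}(h)) equals 0 or 1. In other words, the induced representation of Θ_{ξ,π} from HG_n to SG_{2n} is multiplicity-free, i.e. (SG_{2n}, HG_n, Θ_{ξ,π}) is a Gelfand triple. -/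
/-!
The proof is a Gelfand trick inside the group algebra `B = ℂ[SG_{2n}]`.  Let `e ∈ B` be the
idempotent of `Θ_{ξ,π}` (`thetaIdem`).  The multiplicity in question is the trace of `e` on `ψ`
(`trace_charIdem`).  If the Hecke algebra `e B e` is commutative, it acts by scalars on the range
of `e`, and irreducibility of `ψ` forces that range to have dimension at most one
(`trace_idem_of_comm`).  Commutativity follows from a linear anti-involution `Φ` of `B` that fixes
`e B e` pointwise, since then `xy = Φ(xy) = Φ(y)Φ(x) = yx` on `e B e`.

`Φ` need not come from an anti-automorphism of the group `SG_{2n}`; it is built from an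
anti-involution `φ` of the algebra `ℂ[G]` which is the identity on the center and commutes with
`ι : g ↦ ξ(g) g⁻¹` (`exists_antiInv_fix_center`).  It comes from the Wedderburn decomposition:
`φ = ι` on the blocks stable under `ι`, and on two blocks interchanged by `ι` it is a transposition
and its conjugate under `ι`.  Being the identity on the center, `φ` preserves the canonical trace,
hence it fixes the twisted diagonal element `∑ ξ(g)⁻¹ g ⊗ g` (`exists_groupAlgebra_antiInv`).
`Φ` acts as `φ` on each coordinate and as inversion on `S_{2n}` (`exists_wreath_antiInv`).  It fixes
`e` because it fixes the twisted diagonal elements and because linear characters of `H_n` are real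
(`thetaIdem_fixed`, `hyperoctahedral_char_inv`).

It remains to see that `Φ` fixes `e w e` for `w = (x, s)` (`hecke_fixed`).  The matchings `t` and
`m = s t s⁻¹` together form a union of even polygons on the vertex set.  Reflecting each polygon
in a base vertex gives an involution `σ` with `σ t σ = m`, so `s ∈ σ H_n` and `e w e` is a multiple
of `e x σ e` (`exists_reflection`).  Functions constant on the edges of `t` or of `m` are absorbed
by the two copies of `e`; with them `x` is moved onto the base vertices, and averaging over
functions constant on polygons replaces each coordinate there by a central element of `ℂ[G]`
(`sandwich_fixed`).  The result is `e k σ e` with `k` fixed by `Φ` and commuting with `σ`, and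
`Φ(e k σ e) = e σ k e = e k σ e`.
-/

open scoped BigOperators


/-- The action of `Equiv.Perm α` on `α → G` given by `σ • f = f ∘ σ⁻¹`. -/
def permPiAut (α : Type) (G : Type) [Group G] : Equiv.Perm α →* MulAut (α → G) where
  toFun σ :=
    { toFun := fun f => f ∘ σ.symm
      invFun := fun f => f ∘ σ
      left_inv := fun f => funext fun i => by simp
      right_inv := fun f => funext fun i => by simp
      map_mul' := fun f g => rfl }
  map_one' := rfl
  map_mul' := fun σ τ => rfl

/-- The wreath product `G ≀ S_m`, realized as `(Fin m → G) ⋊ Equiv.Perm (Fin m)`. -/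
abbrev SGW (G : Type) [Group G] (m : ℕ) :=
  (Fin m → G) ⋊[permPiAut (Fin m) G] Equiv.Perm (Fin m)

/-- The function underlying the fixed-point-free involution `tₙ` on `Fin (2n)` swapping
`2i` and `2i+1` for each `i < n`. -/
def tfun (n : ℕ) (k : Fin (2 * n)) : Fin (2 * n) :=
  if h : k.val % 2 = 0 then ⟨k.val + 1, by have := k.isLt; omega⟩
  else ⟨k.val - 1, by have := k.isLt; omega⟩

lemma tfun_involutive (n : ℕ) : Function.Involutive (tfun n) := by
  rintro ⟨k, hklt⟩
  simp only [tfun]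
  split_ifs with h1 h2 h2 <;> rw [Fin.val_mk] at h2 <;> apply Fin.ext <;>
    simp only [Fin.val_mk] <;> omega

/-- The fixed-point-free involution `tₙ ∈ Equiv.Perm (Fin (2n))` swapping `2i` and `2i+1`
for each `0 ≤ i < n`. -/
def tperm (n : ℕ) : Equiv.Perm (Fin (2 * n)) :=
  Function.Involutive.toPerm (tfun n) (tfun_involutive n)

/-- The hyperoctahedral group `Hₙ`: the centralizer of `tₙ` in `Equiv.Perm (Fin (2n))`. -/
def hyperoctahedral (n : ℕ) : Subgroup (Equiv.Perm (Fin (2 * n))) :=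
  Subgroup.centralizer {tperm n}

lemma tperm_apply (n : ℕ) (k : Fin (2 * n)) : tperm n k = tfun n k := rfl

lemma paired_iff {G : Type} [Group G] {n : ℕ} (f : Fin (2 * n) → G) :
    (∀ i : Fin n, f ⟨2 * i.val, by have := i.isLt; omega⟩
        = f ⟨2 * i.val + 1, by have := i.isLt; omega⟩)
      ↔ ∀ k, f (tperm n k) = f k := by
  constructor
  · intro h k
    rw [tperm_apply]
    unfold tfun
    have hk := k.isLt
    split_ifs with h1
    · have hi : k.val / 2 < n := by omega
      have h2 := h ⟨k.val / 2, hi⟩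
      have e1 : (⟨2 * (k.val / 2), by omega⟩ : Fin (2 * n)) = k := Fin.ext (by simp; omega)
      have e2 : (⟨2 * (k.val / 2) + 1, by omega⟩ : Fin (2 * n))
          = (⟨k.val + 1, by omega⟩ : Fin (2 * n)) := Fin.ext (by simp; omega)
      rw [e1, e2] at h2
      exact h2.symm
    · have hi : k.val / 2 < n := by omega
      have h2 := h ⟨k.val / 2, hi⟩
      have e1 : (⟨2 * (k.val / 2), by omega⟩ : Fin (2 * n))
          = (⟨k.val - 1, by omega⟩ : Fin (2 * n)) := Fin.ext (by simp; omega)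
      have e2 : (⟨2 * (k.val / 2) + 1, by omega⟩ : Fin (2 * n)) = k := Fin.ext (by simp; omega)
      rw [e1, e2] at h2
      exact h2
  · intro h i
    have hi := i.isLt
    have h2 := h ⟨2 * i.val, by omega⟩
    rw [tperm_apply] at h2
    unfold tfun at h2
    rw [dif_pos (by simp)] at h2
    exact h2.symm

lemma centralizer_comm {n : ℕ} {σ : Equiv.Perm (Fin (2 * n))}
    (hσ : σ ∈ hyperoctahedral n) (k : Fin (2 * n)) :
    σ (tperm n k) = tperm n (σ k) := by
  have hc : tperm n * σ = σ * tperm n :=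
    Subgroup.mem_centralizer_iff.mp hσ (tperm n) rfl
  have h1 : (σ * tperm n) k = (tperm n * σ) k := by rw [hc]
  simpa [Equiv.Perm.mul_apply] using h1

lemma centralizer_comm_inv {n : ℕ} {σ : Equiv.Perm (Fin (2 * n))}
    (hσ : σ ∈ hyperoctahedral n) (k : Fin (2 * n)) :
    σ.symm (tperm n k) = tperm n (σ.symm k) := by
  have := centralizer_comm ((hyperoctahedral n).inv_mem hσ) k
  simpa using this

/-- The subgroup `HGₙ ≤ SG_{2n}` consisting of pairs `(f, σ)` with `σ ∈ Hₙ` and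
`f(2i) = f(2i+1)` for all `0 ≤ i < n`. -/
def HGn (G : Type) [Group G] (n : ℕ) : Subgroup (SGW G (2 * n)) where
  carrier := {x | x.right ∈ hyperoctahedral n ∧
    ∀ i : Fin n, x.left ⟨2 * i.val, by have := i.isLt; omega⟩
      = x.left ⟨2 * i.val + 1, by have := i.isLt; omega⟩}
  one_mem' := ⟨Subgroup.one_mem _, fun i => rfl⟩
  mul_mem' := by
    rintro a b ⟨ha1, ha2⟩ ⟨hb1, hb2⟩
    refine ⟨Subgroup.mul_mem _ ha1 hb1, ?_⟩
    rw [paired_iff] at ha2 hb2 ⊢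
    intro k
    rw [SemidirectProduct.mul_left]
    show a.left (tperm n k) * b.left (a.right.symm (tperm n k))
      = a.left k * b.left (a.right.symm k)
    rw [ha2 k, centralizer_comm_inv ha1 k, hb2 (a.right.symm k)]
  inv_mem' := by
    rintro a ⟨ha1, ha2⟩
    refine ⟨Subgroup.inv_mem _ ha1, ?_⟩
    rw [paired_iff] at ha2 ⊢
    intro k
    rw [SemidirectProduct.inv_left]
    show (a.left (a.right (tperm n k)))⁻¹ = (a.left (a.right k))⁻¹
    rw [centralizer_comm ha1 k, ha2 (a.right k)]

/-- The linear character `Θ_{ξ,π}` of `HGₙ`, as a function: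
`Θ_{ξ,π}(f,σ) = (∏_{i<n} ξ(f(2i))) · π(σ)`. -/
noncomputable def ThetaFun (G : Type) [Group G] (n : ℕ) (ξ : G →* ℂˣ)
    (π : ↥(hyperoctahedral n) →* ℂˣ) (x : ↥(HGn G n)) : ℂˣ :=
  (∏ i : Fin n, ξ (x.val.left ⟨2 * i.val, by have := i.isLt; omega⟩)) *
    π ⟨x.val.right, x.2.1⟩

/-! ### Anti-involutions of semisimple algebras -/

/-- A `ℂ`-linear anti-involution of an algebra. -/
structure IsAntiInv {A : Type*} [Ring A] [Algebra ℂ A] (τ : A →ₗ[ℂ] A) : Prop where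
  map_one : τ 1 = 1
  map_mul : ∀ a b, τ (a * b) = τ b * τ a
  invol : ∀ a, τ (τ a) = a

/-- Blockwise transposition on a Wedderburn decomposition, together with the block idempotents. -/
lemma exists_transpose_and_blocks (A : Type*) [Ring A] [Algebra ℂ A] [IsSemisimpleRing A]
    [FiniteDimensional ℂ A] :
    ∃ τ : A →ₗ[ℂ] A, IsAntiInv τ ∧ (∀ c, (∀ a, c * a = a * c) → τ c = c) ∧
      ∃ (m : ℕ) (ε : Fin m → A), (∀ i a, ε i * a = a * ε i) ∧
        (∀ i, ε i * ε i = ε i) ∧ (∀ i j, i ≠ j → ε i * ε j = 0) ∧ ∑ i, ε i = 1 ∧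
        (∀ i, ε i ≠ 0) ∧
        ∀ i c, (∀ a, c * a = a * c) → ∃ χ : ℂ, c * ε i = χ • ε i := by
  obtain ⟨m, d, hd, ⟨E⟩⟩ := IsSemisimpleRing.exists_algEquiv_pi_matrix_of_isAlgClosed ℂ A
  -- the blocks of a central element are scalar matrices
  have hsc : ∀ c, (∀ a, c * a = a * c) → ∀ i, ∃ χ : ℂ, E c i = χ • 1 := by
    intro c hc i
    have : E c i ∈ Set.range (Matrix.scalar (Fin (d i))) := by
      apply Matrix.mem_range_scalar_of_commute_single
      intro k l _
      have h := congrArg (fun x => E x i) (hc (E.symm (Pi.single i (Matrix.single k l 1))))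
      simp only [map_mul, AlgEquiv.apply_symm_apply, Pi.mul_apply, Pi.single_eq_same] at h
      exact h.symm
    obtain ⟨χ, hχ⟩ := this
    refine ⟨χ, ?_⟩
    rw [← hχ, Matrix.scalar_apply, Matrix.smul_one_eq_diagonal]
  let T : A →ₗ[ℂ] A :=
    { toFun := fun a => E.symm (fun i => (E a i).transpose)
      map_add' := fun a b => by
        rw [← map_add]; congr 1; ext i; simp
      map_smul' := fun r a => by
        rw [RingHom.id_apply, ← map_smul]; congr 1; ext i; simp }
  have hT : ∀ a, T a = E.symm (fun i => (E a i).transpose) := fun _ => rfl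
  refine ⟨T, ⟨?_, ?_, ?_⟩, ?_, m, fun i => E.symm (Pi.single i 1), ?_, ?_, ?_, ?_, ?_, ?_⟩
  · rw [hT, map_one]
    apply E.injective
    ext i : 1
    simp
  · intro a b
    simp only [hT]
    rw [← map_mul]; congr 1; ext i : 1
    simp [Matrix.transpose_mul]
  · intro a
    simp only [hT, AlgEquiv.apply_symm_apply, Matrix.transpose_transpose]
    exact E.symm_apply_apply a
  · intro c hc
    rw [hT]
    apply E.injective
    rw [AlgEquiv.apply_symm_apply]
    ext i : 1
    obtain ⟨χ, hχ⟩ := hsc c hc i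
    rw [hχ]; simp
  · intro i a
    apply E.injective
    simp only [map_mul, AlgEquiv.apply_symm_apply]
    ext j : 1
    by_cases h : j = i
    · subst h; simp
    · simp [Pi.single_eq_of_ne h]
  · intro i
    rw [← map_mul, ← Pi.single_mul, one_mul]
  · intro i j hij
    rw [← map_mul]
    have : (Pi.single i 1 * Pi.single j 1 : Π i, Matrix (Fin (d i)) (Fin (d i)) ℂ) = 0 := by
      ext k : 1
      by_cases h : k = i
      · subst h; simp [Pi.single_eq_of_ne hij]
      · simp [Pi.single_eq_of_ne h]
    rw [this, map_zero]
  · rw [← map_sum]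
    have : (∑ i, Pi.single i 1 : Π i, Matrix (Fin (d i)) (Fin (d i)) ℂ) = 1 := by
      simpa using Finset.univ_sum_single (1 : Π i, Matrix (Fin (d i)) (Fin (d i)) ℂ)
    rw [this, map_one]
  · intro i h
    have h2 : (Pi.single i 1 : Π i, Matrix (Fin (d i)) (Fin (d i)) ℂ) = 0 :=
      E.symm.injective (by rw [map_zero]; exact h)
    have h3 := congrFun h2 i
    have := hd i
    simp at h3
  · intro i c hc
    obtain ⟨χ, hχ⟩ := hsc c hc i
    refine ⟨χ, ?_⟩
    apply E.injective
    simp only [map_mul, map_smul, AlgEquiv.apply_symm_apply]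
    ext j : 1
    by_cases h : j = i
    · subst h; simp [hχ]
    · simp [Pi.single_eq_of_ne h]

/-- Every anti-involution `ι` of a semisimple algebra permutes the blocks; it commutes with some
anti-involution `φ` that is the identity on the center.  On the blocks fixed by `ι` one takes
`φ = ι`; on the remaining ones, which `ι` swaps in pairs, one takes a transposition `τ` on one
member of each pair and `ι τ ι` on the other. -/
lemma exists_antiInv_fix_center {A : Type*} [Ring A] [Algebra ℂ A] [IsSemisimpleRing A]
    [FiniteDimensional ℂ A] (ι : A →ₗ[ℂ] A) (hι : IsAntiInv ι) :
    ∃ φ : A →ₗ[ℂ] A, IsAntiInv φ ∧ (∀ c, (∀ a, c * a = a * c) → φ c = c) ∧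
      ∀ a, φ (ι a) = ι (φ a) := by
  obtain ⟨τ, hτ, hτc, m, ε, hεc, hεi, hεo, hεs, hε0, hεχ⟩ := exists_transpose_and_blocks A
  -- `ι` preserves the center
  have hιc : ∀ c, (∀ a, c * a = a * c) → ∀ a, ι c * a = a * ι c := by
    intro c hc a
    rw [← hι.invol a, ← hι.map_mul, ← hι.map_mul, hc]
  -- a product of a block idempotent with another central idempotent is `0` or the block idempotent
  have h01 : ∀ i c, (∀ a, c * a = a * c) → c * c = c → c * ε i = 0 ∨ c * ε i = ε i := by
    intro i c hc hcc
    obtain ⟨χ, hχ⟩ := hεχ i c hc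
    have h1 : c * (c * ε i) = c * ε i := by rw [← mul_assoc, hcc]
    rw [hχ, mul_smul_comm, hχ, smul_smul] at h1
    have h2 : (χ * χ - χ) • ε i = 0 := by rw [sub_smul, h1, sub_self]
    rcases smul_eq_zero.mp h2 with h | h
    · have h3 : χ * (χ - 1) = 0 := by linear_combination h
      rcases mul_eq_zero.mp h3 with h | h
      · left; rw [hχ, h, zero_smul]
      · right; rw [hχ, sub_eq_zero.mp h, one_smul]
    · exact absurd h (hε0 i)
  have hιi : ∀ i, ι (ε i) * ι (ε i) = ι (ε i) := fun i => by rw [← hι.map_mul, hεi]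
  have hs : ∀ i, ∃ j, ι (ε i) = ε j := by
    intro i
    have hne : ι (ε i) ≠ 0 := fun h => hε0 i (by rw [← hι.invol (ε i), h, map_zero])
    have : ∃ j, ι (ε i) * ε j ≠ 0 := by
      by_contra hcon
      push Not at hcon
      apply hne
      rw [← mul_one (ι (ε i)), ← hεs, Finset.mul_sum]
      exact Finset.sum_eq_zero fun j _ => hcon j
    obtain ⟨j, hj⟩ := this
    refine ⟨j, ?_⟩
    have e1 : ι (ε i) * ε j = ε j := (h01 j _ (hιc _ (hεc i)) (hιi i)).resolve_left hj
    rcases h01 i _ (hιc _ (hεc j)) (hιi j) with h | h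
    · exfalso
      apply hj
      rw [← hι.invol (ι (ε i) * ε j), hι.map_mul, hι.invol, h, map_zero]
    · rw [← h, hι.map_mul, hι.invol, e1]
  choose s hs using hs
  have hεinj : ∀ i j, ε i = ε j → i = j := by
    intro i j h
    by_contra hne
    exact hε0 j (by rw [← hεi j]; nth_rewrite 1 [← h]; exact hεo i j hne)
  have hss : ∀ i, s (s i) = i := fun i => hεinj _ _ (by rw [← hs, ← hs, hι.invol])
  -- the central idempotents of the blocks fixed by `ι`, and of the two halves of the others
  have zmul : ∀ S T : Finset (Fin m), (∑ i ∈ S, ε i) * (∑ i ∈ T, ε i) = ∑ i ∈ S ∩ T, ε i := by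
    intro S T
    rw [Finset.sum_mul_sum, ← Finset.sum_filter_add_sum_filter_not S (· ∈ T)]
    rw [Finset.sum_eq_zero (s := S.filter (· ∉ T)), add_zero, Finset.filter_mem_eq_inter]
    · refine Finset.sum_congr rfl fun i hi => ?_
      rw [Finset.sum_eq_single i]
      · exact hεi i
      · exact fun j _ hji => hεo i j hji.symm
      · exact fun h => absurd (Finset.mem_inter.mp hi).2 h
    · intro i hi
      refine Finset.sum_eq_zero fun j hj => hεo i j ?_
      rintro rfl
      exact (Finset.mem_filter.mp hi).2 hj
  have zc : ∀ (S : Finset (Fin m)) a, (∑ i ∈ S, ε i) * a = a * (∑ i ∈ S, ε i) := by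
    intro S a
    rw [Finset.sum_mul, Finset.mul_sum]
    exact Finset.sum_congr rfl fun i _ => hεc i a
  obtain ⟨z1, hz1⟩ : ∃ z, z = ∑ i with s i = i, ε i := ⟨_, rfl⟩
  obtain ⟨z2, hz2⟩ : ∃ z, z = ∑ i with i < s i, ε i := ⟨_, rfl⟩
  obtain ⟨z3, hz3⟩ : ∃ z, z = ∑ i with s i < i, ε i := ⟨_, rfl⟩
  have c1 : ∀ a, z1 * a = a * z1 := fun a => hz1 ▸ zc _ a
  have c2 : ∀ a, z2 * a = a * z2 := fun a => hz2 ▸ zc _ a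
  have c3 : ∀ a, z3 * a = a * z3 := fun a => hz3 ▸ zc _ a
  have z11 : z1 * z1 = z1 := by rw [hz1, zmul, Finset.inter_self]
  have z22 : z2 * z2 = z2 := by rw [hz2, zmul, Finset.inter_self]
  have z33 : z3 * z3 = z3 := by rw [hz3, zmul, Finset.inter_self]
  have z12 : z1 * z2 = 0 := by
    rw [hz1, hz2, zmul, ← Finset.filter_and, Finset.filter_false_of_mem, Finset.sum_empty]
    rintro i - ⟨h, h'⟩; omega
  have z13 : z1 * z3 = 0 := by
    rw [hz1, hz3, zmul, ← Finset.filter_and, Finset.filter_false_of_mem, Finset.sum_empty]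
    rintro i - ⟨h, h'⟩; omega
  have z23 : z2 * z3 = 0 := by
    rw [hz2, hz3, zmul, ← Finset.filter_and, Finset.filter_false_of_mem, Finset.sum_empty]
    rintro i - ⟨h, h'⟩; omega
  have z21 : z2 * z1 = 0 := by rw [c2, z12]
  have z31 : z3 * z1 = 0 := by rw [c3, z13]
  have z32 : z3 * z2 = 0 := by rw [c3, z23]
  have zsum : z1 + z2 + z3 = 1 := by
    rw [← hεs, hz1, hz2, hz3, Finset.sum_filter, Finset.sum_filter, Finset.sum_filter,
      ← Finset.sum_add_distrib, ← Finset.sum_add_distrib]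
    refine Finset.sum_congr rfl fun i _ => ?_
    rcases lt_trichotomy (s i) i with h | h | h
    · simp [h, h.ne, h.not_gt]
    · simp [h]
    · simp [h, h.ne', h.not_gt]
  have ι1 : ι z1 = z1 := by
    rw [hz1, map_sum]
    refine Finset.sum_congr rfl fun i hi => ?_
    rw [hs, (Finset.mem_filter.mp hi).2]
  have ι2 : ι z2 = z3 := by
    rw [hz2, hz3, map_sum]
    refine Finset.sum_nbij' s s ?_ ?_ ?_ ?_ ?_
    · intro i hi; simpa [hss] using hi
    · intro i hi; simpa [hss] using hi
    · intro i _; exact hss i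
    · intro i _; exact hss i
    · intro i _; exact hs i
  have ι3 : ι z3 = z2 := by rw [← ι2, hι.invol]
  have ιfix : ∀ c, (∀ a, c * a = a * c) → ι (c * z1) = c * z1 := by
    intro c hc
    rw [hz1, Finset.mul_sum, map_sum]
    refine Finset.sum_congr rfl fun i hi => ?_
    obtain ⟨χ, hχ⟩ := hεχ i c hc
    rw [hχ, map_smul, hs, (Finset.mem_filter.mp hi).2]
  have τ1 : τ z1 = z1 := hτc _ c1
  have τ2 : τ z2 = z2 := hτc _ c2
  -- the three pieces of `φ`
  have f1 : ∀ a, ι (a * z1) = ι a * z1 := fun a => by rw [hι.map_mul, ι1, c1]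
  have f2 : ∀ a, ι (a * z2) = ι a * z3 := fun a => by rw [hι.map_mul, ι2, c3]
  have f3 : ∀ a, ι (a * z3) = ι a * z2 := fun a => by rw [hι.map_mul, ι3, c2]
  have t2 : ∀ a, τ (a * z2) = τ a * z2 := fun a => by rw [hτ.map_mul, τ2, c2]
  let φ : A →ₗ[ℂ] A := ι ∘ₗ LinearMap.mulRight ℂ z1 + τ ∘ₗ LinearMap.mulRight ℂ z2 +
    ι ∘ₗ τ ∘ₗ ι ∘ₗ LinearMap.mulRight ℂ z3
  have hφ : ∀ a, φ a = ι a * z1 + τ a * z2 + ι (τ (ι a)) * z3 := by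
    intro a
    simp only [φ, LinearMap.add_apply, LinearMap.comp_apply, LinearMap.mulRight_apply,
      f1, t2, f3, f2]
  have m1 : ∀ a, φ a * z1 = ι a * z1 := fun a => by
    rw [hφ, add_mul, add_mul, mul_assoc, mul_assoc, mul_assoc, z11, z21, z31]; simp
  have m2 : ∀ a, φ a * z2 = τ a * z2 := fun a => by
    rw [hφ, add_mul, add_mul, mul_assoc, mul_assoc, mul_assoc, z12, z22, z32]; simp
  have m3 : ∀ a, φ a * z3 = ι (τ (ι a)) * z3 := fun a => by
    rw [hφ, add_mul, add_mul, mul_assoc, mul_assoc, mul_assoc, z13, z23, z33]; simp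
  have ext3 : ∀ a b, a * z1 = b * z1 → a * z2 = b * z2 → a * z3 = b * z3 → a = b := by
    intro a b h1 h2 h3
    rw [← mul_one a, ← mul_one b, ← zsum, mul_add, mul_add, mul_add, mul_add, h1, h2, h3]
  have mm : ∀ z : A, (∀ a, z * a = a * z) → z * z = z → ∀ a b, a * b * z = (a * z) * (b * z) := by
    intro z hz hzz a b
    rw [mul_assoc a z, ← mul_assoc z b z, hz b, mul_assoc b z z, hzz, mul_assoc]
  refine ⟨φ, ⟨?_, ?_, ?_⟩, ?_, ?_⟩
  · rw [hφ, hι.map_one, hτ.map_one, hι.map_one, one_mul, one_mul, one_mul, zsum]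
  · intro a b
    apply ext3
    · rw [m1, mm z1 c1 z11, m1, m1, ← mm z1 c1 z11, hι.map_mul]
    · rw [m2, mm z2 c2 z22, m2, m2, ← mm z2 c2 z22, hτ.map_mul]
    · rw [m3, mm z3 c3 z33, m3, m3, ← mm z3 c3 z33, hι.map_mul, hτ.map_mul, hι.map_mul]
  · intro a
    apply ext3
    · rw [m1, ← f1, m1, f1, hι.invol]
    · rw [m2, ← t2, m2, t2, hτ.invol]
    · rw [m3, ← f2, ← t2, ← f3, m3, f3, t2, f2, hι.invol, hτ.invol, hι.invol]
  · intro c hc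
    apply ext3
    · rw [m1, ← f1, ιfix c hc]
    · rw [m2, hτc c hc]
    · rw [m3, hτc _ (hιc c hc), hι.invol]
  · intro a
    apply ext3
    · rw [m1, ← f1 (φ a), m1, f1]
    · rw [m2, ← f3 (φ a), m3, f3, hι.invol]
    · rw [m3, hι.invol, ← f2 (φ a), m2, f2]

/-! ### The anti-involution of the group algebra of `G` -/

/-- The anti-involution `g ↦ ξ(g) g⁻¹` of the group algebra. -/
lemma exists_twisted_inverse {G : Type} [Group G] (ξ : G →* ℂˣ) :
    ∃ ι : MonoidAlgebra ℂ G →ₗ[ℂ] MonoidAlgebra ℂ G, IsAntiInv ι ∧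
      ∀ g, ι (MonoidAlgebra.single g 1) = MonoidAlgebra.single g⁻¹ (ξ g : ℂ) := by
  let F : G →* (MonoidAlgebra ℂ G)ᵐᵒᵖ :=
    { toFun := fun g => MulOpposite.op (MonoidAlgebra.single g⁻¹ (ξ g : ℂ))
      map_one' := by simp [MonoidAlgebra.one_def]
      map_mul' := fun g h => by
        rw [← MulOpposite.op_mul, MonoidAlgebra.single_mul_single]
        simp [mul_comm] }
  let L := MonoidAlgebra.lift ℂ _ G F
  let ι : MonoidAlgebra ℂ G →ₗ[ℂ] MonoidAlgebra ℂ G :=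
    (MulOpposite.opLinearEquiv ℂ).symm.toLinearMap ∘ₗ L.toLinearMap
  have hι : ∀ a, ι a = MulOpposite.unop (L a) := fun _ => rfl
  have hs : ∀ g, ι (MonoidAlgebra.single g 1) = MonoidAlgebra.single g⁻¹ (ξ g : ℂ) := by
    intro g
    rw [hι, MonoidAlgebra.lift_single, one_smul]
    rfl
  refine ⟨ι, ⟨?_, ?_, ?_⟩, hs⟩
  · rw [hι, map_one]; rfl
  · intro a b; rw [hι, map_mul]; rfl
  · intro a
    induction a using MonoidAlgebra.induction_linear with
    | zero => simp
    | add f g hf hg => rw [map_add, map_add, hf, hg]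
    | single g r =>
      have h1 : ∀ (h : G) (c : ℂ), MonoidAlgebra.single h c = c • MonoidAlgebra.single h (1 : ℂ) :=
        fun h c => by simp [MonoidAlgebra.smul_single]
      rw [h1 g r, map_smul, map_smul, hs, h1, map_smul, hs, MonoidAlgebra.smul_single]
      simp

/-- An anti-involution of the group algebra that is the identity on the center and satisfies
`(φ ⊗ φ)(∑ ξ(g)⁻¹ g ⊗ g) = ∑ ξ(g)⁻¹ g ⊗ g`; the tensor identity is phrased through arbitrary
linear maps `j₁`, `j₂` into an algebra.  The element is `(1 ⊗ ι)(∑ g ⊗ g⁻¹)` with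
`ι(g) = ξ(g) g⁻¹`, and `∑ g ⊗ g⁻¹` is dual to the form `(a, b) ↦` (coefficient of `1` in `ab`),
so invariance follows once `φ` commutes with `ι` and preserves the form. -/
lemma exists_groupAlgebra_antiInv {G : Type} [Group G] [Fintype G] (ξ : G →* ℂˣ) :
    ∃ φ : MonoidAlgebra ℂ G →ₗ[ℂ] MonoidAlgebra ℂ G, IsAntiInv φ ∧
      (∀ c, (∀ a, c * a = a * c) → φ c = c) ∧
      ∀ (B : Type) [Ring B] [Algebra ℂ B] (j₁ j₂ : MonoidAlgebra ℂ G →ₗ[ℂ] B),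
        ∑ g, (ξ g : ℂ)⁻¹ • (j₁ (φ (MonoidAlgebra.single g 1)) * j₂ (φ (MonoidAlgebra.single g 1)))
          = ∑ g, (ξ g : ℂ)⁻¹ • (j₁ (MonoidAlgebra.single g 1) * j₂ (MonoidAlgebra.single g 1)) := by
  classical
  obtain ⟨ι, hι, hιs⟩ := exists_twisted_inverse ξ
  have : FiniteDimensional ℂ (MonoidAlgebra ℂ G) :=
    Module.Finite.equiv (MonoidAlgebra.coeffLinearEquiv ℂ).symm
  have : NeZero (Nat.card G : ℂ) := ⟨by simp⟩
  have : IsSemisimpleRing (MonoidAlgebra ℂ G) :=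
    inferInstanceAs (IsSemisimpleModule (MonoidAlgebra ℂ G) (MonoidAlgebra ℂ G))
  obtain ⟨φ, hφ, hφc, hφι⟩ := exists_antiInv_fix_center ι hι
  refine ⟨φ, hφ, hφc, ?_⟩
  -- the trace `lam`
  let lam : MonoidAlgebra ℂ G → ℂ := fun a => a.coeff 1
  have lam_add : ∀ a b, lam (a + b) = lam a + lam b := fun a b => rfl
  have lam_sum : ∀ (f : G → MonoidAlgebra ℂ G), lam (∑ g, f g) = ∑ g, lam (f g) := fun f => by
    simp [lam, MonoidAlgebra.coeff_sum]
  have lam_mul : ∀ a b : MonoidAlgebra ℂ G, lam (a * b) = ∑ x, a.coeff x * b.coeff x⁻¹ := by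
    intro a b
    change (a * b).coeff 1 = _
    rw [MonoidAlgebra.coeff_mul_apply_left, Finsupp.sum_fintype _ _ (by simp)]
    simp
  have lam_comm : ∀ a b : MonoidAlgebra ℂ G, lam (a * b) = lam (b * a) := by
    intro a b
    rw [lam_mul, lam_mul, ← Equiv.sum_comp (Equiv.inv G)]
    simp [mul_comm]
  -- averaging over conjugation reduces the invariance of `lam` to central elements
  have hlam : ∀ a, lam (φ a) = lam a := by
    intro a
    let u : G → MonoidAlgebra ℂ G := fun g => MonoidAlgebra.single g 1
    have uu : ∀ g, u g⁻¹ * u g = 1 := fun g => by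
      simp [u, MonoidAlgebra.single_mul_single, MonoidAlgebra.one_def]
    have umul : ∀ g h, u g * u h = u (g * h) := fun g h => by
      simp [u, MonoidAlgebra.single_mul_single]
    have hc : ∀ b, (∑ g, u g * a * u g⁻¹) * b = b * ∑ g, u g * a * u g⁻¹ := by
      intro b
      induction b using MonoidAlgebra.induction_linear with
      | zero => simp
      | add f g hf hg => rw [mul_add, add_mul, hf, hg]
      | single h r =>
        have : MonoidAlgebra.single h r = r • u h := by simp [u, MonoidAlgebra.smul_single]
        rw [this, mul_smul_comm, smul_mul_assoc]
        congr 1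
        rw [Finset.sum_mul, Finset.mul_sum, ← Equiv.sum_comp (Equiv.mulLeft h)]
        refine Finset.sum_congr rfl fun g _ => ?_
        simp only [Equiv.coe_mulLeft, mul_inv_rev, ← umul]
        simp only [mul_assoc, uu, mul_one]
    have h1 := congrArg lam (hφc _ hc)
    rw [map_sum, lam_sum, lam_sum] at h1
    have h2 : ∀ g, lam (u g * a * u g⁻¹) = lam a := fun g => by
      rw [lam_comm, ← mul_assoc, uu, one_mul]
    have h3 : ∀ g, lam (φ (u g * a * u g⁻¹)) = lam (φ a) := fun g => by
      rw [hφ.map_mul, hφ.map_mul, lam_comm, mul_assoc, ← hφ.map_mul, uu, hφ.map_one, mul_one]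
    simp only [h2, h3, Finset.sum_const, Finset.card_univ, nsmul_eq_mul] at h1
    exact mul_left_cancel₀ (by simp) h1
  -- matrix of `φ` and of its dual
  let M : Matrix G G ℂ := fun g x => (φ (MonoidAlgebra.single g 1)).coeff x
  let N : Matrix G G ℂ := fun g x => (φ (MonoidAlgebra.single g⁻¹ 1)).coeff x⁻¹
  have hMN : M * N.transpose = 1 := by
    ext g k
    rw [Matrix.mul_apply]
    have : ∑ x, M g x * N.transpose x k
        = lam (φ (MonoidAlgebra.single k⁻¹ 1 * MonoidAlgebra.single g 1)) := by
      rw [hφ.map_mul, lam_mul]; rfl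
    rw [this, hlam, MonoidAlgebra.single_mul_single]
    simp only [lam, MonoidAlgebra.coeff_single, Finsupp.single_apply, Matrix.one_apply, mul_one,
      inv_mul_eq_one, eq_comm]
  have hNM : M.transpose * N = 1 := by
    have h := mul_eq_one_comm.mp hMN
    have h2 := congrArg Matrix.transpose h
    rwa [Matrix.transpose_mul, Matrix.transpose_transpose, Matrix.transpose_one] at h2
  have hι_coeff : ∀ a y, (ι a).coeff y⁻¹ = (ξ y : ℂ) * a.coeff y := by
    intro a y
    induction a using MonoidAlgebra.induction_linear with
    | zero => simp
    | add f g hf hg => rw [map_add, MonoidAlgebra.coeff_add, MonoidAlgebra.coeff_add,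
        Finsupp.add_apply, Finsupp.add_apply, hf, hg]; ring
    | single h r =>
      have : MonoidAlgebra.single h r = r • MonoidAlgebra.single h (1 : ℂ) := by
        simp [MonoidAlgebra.smul_single]
      rw [this, map_smul, hιs]
      simp only [MonoidAlgebra.coeff_smul, MonoidAlgebra.coeff_single, Finsupp.smul_apply,
        Finsupp.single_apply, inv_inj]
      by_cases hy : h = y
      · simp [hy, mul_comm]
      · simp [hy]
  have hMξ : ∀ g y, (ξ g : ℂ)⁻¹ * M g y = (ξ y : ℂ)⁻¹ * N g y := by
    intro g y
    have h1 : (ξ g : ℂ) * N g y = (ξ y : ℂ) * M g y := by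
      have h2 := hι_coeff (φ (MonoidAlgebra.single g 1)) y
      rw [← hφι, hιs] at h2
      have : MonoidAlgebra.single g⁻¹ (ξ g : ℂ)
          = (ξ g : ℂ) • MonoidAlgebra.single g⁻¹ (1 : ℂ) := by
        simp [MonoidAlgebra.smul_single]
      rw [this, map_smul] at h2
      exact h2
    have hg : (ξ g : ℂ) ≠ 0 := (ξ g).ne_zero
    have hy : (ξ y : ℂ) ≠ 0 := (ξ y).ne_zero
    field_simp
    linear_combination -h1
  intro B _ _ j₁ j₂
  have hexp : ∀ (j : MonoidAlgebra ℂ G →ₗ[ℂ] B) g, j (φ (MonoidAlgebra.single g 1))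
      = ∑ x, M g x • j (MonoidAlgebra.single x 1) := by
    intro j g
    have : φ (MonoidAlgebra.single g 1) = ∑ x, M g x • MonoidAlgebra.single x (1 : ℂ) := by
      ext y
      simp [M, MonoidAlgebra.coeff_sum, MonoidAlgebra.smul_single]
    rw [this, map_sum]
    simp only [map_smul]
  calc _ = ∑ g, ∑ x, ∑ y, ((ξ y : ℂ)⁻¹ * (M g x * N g y)) •
        (j₁ (MonoidAlgebra.single x 1) * j₂ (MonoidAlgebra.single y 1)) := by
        refine Finset.sum_congr rfl fun g _ => ?_
        rw [hexp, hexp, Finset.sum_mul_sum, Finset.smul_sum]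
        refine Finset.sum_congr rfl fun x _ => ?_
        rw [Finset.smul_sum]
        refine Finset.sum_congr rfl fun y _ => ?_
        rw [smul_mul_smul_comm, smul_smul]
        congr 1
        linear_combination M g x * hMξ g y
    _ = ∑ x, ∑ y, ((ξ y : ℂ)⁻¹ * (M.transpose * N) x y) •
        (j₁ (MonoidAlgebra.single x 1) * j₂ (MonoidAlgebra.single y 1)) := by
        rw [Finset.sum_comm]
        refine Finset.sum_congr rfl fun x _ => ?_
        rw [Finset.sum_comm]
        refine Finset.sum_congr rfl fun y _ => ?_
        rw [← Finset.sum_smul, ← Finset.mul_sum]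
        rfl
    _ = _ := by
        rw [hNM]
        refine Finset.sum_congr rfl fun x _ => ?_
        rw [Finset.sum_eq_single x]
        · simp
        · intro y _ hy; simp [Matrix.one_apply_ne' hy]
        · simp

/-! ### Reflections of a pair of matchings -/

/-- Let `D` be a group of pairs `(a, c)` of permutations, stable under swapping the components and
such that `c` fixes every fixed point of `a`.  After a base point is chosen in every orbit of the
first components, `a p ↦ c p` is a well-defined involution `σ`, conjugating each `a` to its
partner `c`.  The function `b` sends a point to the base point of its orbit. -/
lemma exists_twisting_involution {V : Type*} (D : Subgroup (Equiv.Perm V × Equiv.Perm V))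
    (hswap : ∀ a c, (a, c) ∈ D → (c, a) ∈ D)
    (hstab : ∀ a c p, (a, c) ∈ D → a p = p → c p = p) :
    ∃ (σ : Equiv.Perm V) (b : V → V), (∀ v, σ (σ v) = v) ∧
      (∀ a c v, (a, c) ∈ D → σ (a v) = c (σ v)) ∧ (∀ a c v, (a, c) ∈ D → b (a v) = b v) ∧
      (∀ v, b (b v) = b v) ∧ (∀ v, σ (b v) = b v) ∧ (∀ v, b (σ v) = b v) ∧
      ∀ v, ∃ a c, (a, c) ∈ D ∧ a (b v) = v := by
  let S : Setoid V :=
    { r := fun v w => ∃ a c, (a, c) ∈ D ∧ a v = w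
      iseqv :=
        { refl := fun v => ⟨1, 1, D.one_mem, rfl⟩
          symm := by
            rintro v w ⟨a, c, h, rfl⟩
            exact ⟨a⁻¹, c⁻¹, D.inv_mem h, by simp⟩
          trans := by
            rintro u v w ⟨a, c, h, rfl⟩ ⟨a', c', h', rfl⟩
            exact ⟨a' * a, c' * c, D.mul_mem h' h, rfl⟩ } }
  let b : V → V := fun v => (Quotient.mk S v).out
  have hb : ∀ v, ∃ a c, (a, c) ∈ D ∧ a (b v) = v := fun v => Quotient.mk_out (s := S) v
  have hba : ∀ a c v, (a, c) ∈ D → b (a v) = b v := by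
    intro a c v h
    have : Quotient.mk S (a v) = Quotient.mk S v := Quotient.sound
      (S.iseqv.symm ⟨a, c, h, rfl⟩)
    simp only [b, this]
  have hbb : ∀ v, b (b v) = b v := by
    intro v
    obtain ⟨a, c, h, e⟩ := hb v
    rw [← hba a c (b v) h, e]
  choose A C hD hA using hb
  let f : V → V := fun v => C v (b v)
  have hf : ∀ a c v, (a, c) ∈ D → f (a (b v)) = c (b v) := by
    intro a c v h
    have e : b (a (b v)) = b v := by rw [hba a c _ h, hbb]
    have h1 := hD (a (b v))
    have h2 := hA (a (b v))
    have h3 := hstab _ _ (b v) (D.mul_mem (D.inv_mem h1) h) (by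
      rw [e] at h2
      change (A (a (b v)))⁻¹ (a (b v)) = b v
      rw [Equiv.Perm.inv_eq_iff_eq]; exact h2.symm)
    change (C (a (b v)))⁻¹ (c (b v)) = b v at h3
    rw [Equiv.Perm.inv_eq_iff_eq] at h3
    change C (a (b v)) (b (a (b v))) = _
    rw [e, h3]
  have hbf : ∀ v, b (f v) = b v := by
    intro v
    change b (C v (b v)) = _
    rw [hba _ _ _ (hswap _ _ (hD v)), hbb]
  have hff : ∀ v, f (f v) = v := by
    intro v
    change f (C v (b v)) = v
    rw [hf _ _ _ (hswap _ _ (hD v)), hA]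
  refine ⟨⟨f, f, hff, hff⟩, b, hff, ?_, hba, hbb, ?_, hbf, fun v => ⟨A v, C v, hD v, hA v⟩⟩
  · intro a c v h
    change f (a v) = c (f v)
    have h1 := hf _ _ v (D.mul_mem h (hD v))
    change f (a (A v (b v))) = c (C v (b v)) at h1
    rwa [hA] at h1
  · intro v
    exact hf 1 1 v D.one_mem

/-- For two fixed-point-free involutions `t`, `m` (perfect matchings, whose union is a disjoint
union of even polygons), reflecting every polygon through a base vertex gives an involution `σ`
interchanging them.  `b` is the base vertex of a polygon, and `d` the distance to it. -/
lemma exists_reflection {V : Type*} (t m : Equiv.Perm V) (ht : ∀ v, t (t v) = v)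
    (hm : ∀ v, m (m v) = v) (ht0 : ∀ v, t v ≠ v) (hm0 : ∀ v, m v ≠ v) :
    ∃ (σ : Equiv.Perm V) (b : V → V) (d : V → ℕ), (∀ v, σ (σ v) = v) ∧
      (∀ v, σ (t v) = m (σ v)) ∧ (∀ v, b (t v) = b v) ∧ (∀ v, b (m v) = b v) ∧
      (∀ v, b (b v) = b v) ∧ (∀ v, σ (b v) = b v) ∧ (∀ v, b (σ v) = b v) ∧
      ∀ v, b v ≠ v → d (t v) < d v ∨ d (m v) < d v := by
  have htt : t * t = 1 := Equiv.ext ht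
  have hmm : m * m = 1 := Equiv.ext hm
  have htI : t⁻¹ = t := inv_eq_of_mul_eq_one_right htt
  have hmI : m⁻¹ = m := inv_eq_of_mul_eq_one_right hmm
  let D : Subgroup (Equiv.Perm V × Equiv.Perm V) := Subgroup.closure {(t, m), (m, t)}
  have hD1 : (t, m) ∈ D := Subgroup.subset_closure (by simp)
  have hD2 : (m, t) ∈ D := Subgroup.subset_closure (by simp)
  have hswap : ∀ a c, (a, c) ∈ D → (c, a) ∈ D := by
    intro a c h
    have : D ≤ D.comap (MulEquiv.prodComm : _ ≃* Equiv.Perm V × Equiv.Perm V).toMonoidHom := by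
      rw [Subgroup.closure_le]
      rintro x (rfl | rfl)
      · exact hD2
      · exact hD1
    exact this h
  have hinv : (m * t)⁻¹ = t * m := by rw [mul_inv_rev, htI, hmI]
  have hst : ∀ i : ℤ, t * (m * t) ^ i = (m * t) ^ (-i) * t := by
    intro i
    have h := (SemiconjBy.zpow_right (show SemiconjBy t (m * t) (m * t)⁻¹ by
      rw [hinv, SemiconjBy, mul_assoc]) i)
    rw [inv_zpow', SemiconjBy] at h
    exact h
  have hsm : ∀ i : ℤ, m * (m * t) ^ i = (m * t) ^ (-i) * m := by
    intro i
    have h := (SemiconjBy.zpow_right (show SemiconjBy m (m * t) (m * t)⁻¹ by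
      rw [hinv, SemiconjBy, ← mul_assoc, hmm, mul_assoc, hmm]; simp) i)
    rw [inv_zpow', SemiconjBy] at h
    exact h
  -- elements of `D` are rotations, paired with their inverses, or reflections
  have hform : ∀ x ∈ D, (∃ i : ℤ, x = ((m * t) ^ i, (m * t) ^ (-i))) ∨
      ∃ i : ℤ, x = ((m * t) ^ i * t, (m * t) ^ (-i) * m) := by
    have step1 : ∀ y : Equiv.Perm V × Equiv.Perm V,
        ((∃ i : ℤ, y = ((m * t) ^ i, (m * t) ^ (-i))) ∨
          ∃ i : ℤ, y = ((m * t) ^ i * t, (m * t) ^ (-i) * m)) →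
        ((∃ i : ℤ, (t, m) * y = ((m * t) ^ i, (m * t) ^ (-i))) ∨
          ∃ i : ℤ, (t, m) * y = ((m * t) ^ i * t, (m * t) ^ (-i) * m)) := by
      rintro y (⟨i, rfl⟩ | ⟨i, rfl⟩)
      · exact Or.inr ⟨-i, by rw [Prod.mk_mul_mk, hst, hsm]⟩
      · refine Or.inl ⟨-i, ?_⟩
        rw [Prod.mk_mul_mk, ← mul_assoc, ← mul_assoc, hst, hsm, mul_assoc, mul_assoc, htt, hmm,
          mul_one, mul_one]
    have step2 : ∀ y : Equiv.Perm V × Equiv.Perm V,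
        ((∃ i : ℤ, y = ((m * t) ^ i, (m * t) ^ (-i))) ∨
          ∃ i : ℤ, y = ((m * t) ^ i * t, (m * t) ^ (-i) * m)) →
        ((∃ i : ℤ, (m, t) * y = ((m * t) ^ i, (m * t) ^ (-i))) ∨
          ∃ i : ℤ, (m, t) * y = ((m * t) ^ i * t, (m * t) ^ (-i) * m)) := by
      intro y hy
      have e : (m, t) = ((m * t) ^ (1 : ℤ), (m * t) ^ (-1 : ℤ)) * (t, m) := by
        rw [Prod.mk_mul_mk, zpow_one, zpow_neg_one, hinv, mul_assoc, mul_assoc, htt, hmm, mul_one,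
          mul_one]
      rw [e, mul_assoc]
      rcases step1 y hy with ⟨i, h⟩ | ⟨i, h⟩
      · exact Or.inl ⟨1 + i, by rw [h, Prod.mk_mul_mk, ← zpow_add, ← zpow_add, neg_add]⟩
      · refine Or.inr ⟨1 + i, ?_⟩
        rw [h, Prod.mk_mul_mk, ← mul_assoc, ← mul_assoc, ← zpow_add, ← zpow_add, neg_add]
    intro x hx
    induction hx using Subgroup.closure_induction_left with
    | one => exact Or.inl ⟨0, by simp; rfl⟩
    | mul_left x hx y hy ih =>
      rcases hx with rfl | rfl
      · exact step1 y ih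
      · exact step2 y ih
    | inv_mul_cancel x hx y hy ih =>
      rcases hx with rfl | rfl
      · rw [Prod.inv_mk, htI, hmI]; exact step1 y ih
      · rw [Prod.inv_mk, htI, hmI]; exact step2 y ih
  have hstab : ∀ a c p, (a, c) ∈ D → a p = p → c p = p := by
    intro a c p h hp
    rcases hform _ h with ⟨i, e⟩ | ⟨i, e⟩
    · rw [Prod.mk.injEq] at e
      rw [e.2, zpow_neg, Equiv.Perm.inv_eq_iff_eq, ← e.1, hp]
    · -- a reflection is conjugate to `t` or to `m`, hence has no fixed point
      rw [Prod.mk.injEq] at e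
      exfalso
      rw [e.1] at hp
      rcases Int.even_or_odd' i with ⟨k, rfl | rfl⟩
      · have e2 : (m * t) ^ (2 * k) * t = (m * t) ^ (- -k) * (t * (m * t) ^ (-k)) := by
          rw [hst, neg_neg, ← mul_assoc, ← zpow_add, two_mul]
        rw [e2] at hp
        change ((m * t) ^ (- -k)) (t (((m * t) ^ (-k)) p)) = p at hp
        rw [zpow_neg, Equiv.Perm.inv_eq_iff_eq] at hp
        exact ht0 _ hp
      · have e2 : (m * t) ^ (2 * k + 1) * t = (m * t) ^ (- -k) * (m * (m * t) ^ (-k)) := by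
          rw [hsm, neg_neg, ← mul_assoc, ← zpow_add, zpow_add_one, mul_assoc, mul_assoc, htt,
            mul_one, two_mul]
        rw [e2] at hp
        change ((m * t) ^ (- -k)) (m (((m * t) ^ (-k)) p)) = p at hp
        rw [zpow_neg, Equiv.Perm.inv_eq_iff_eq] at hp
        exact hm0 _ hp
  obtain ⟨σ, b, h1, h2, h3, h4, h5, h6, h7⟩ := exists_twisting_involution D hswap hstab
  -- `R l v`: the base vertex can be reached from `v` in `l` steps
  let R : ℕ → V → Prop := fun l => Nat.rec (fun v => b v = v) (fun _ r v => r (t v) ∨ r (m v)) l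
  have hR0 : ∀ v, R 0 v ↔ b v = v := fun _ => Iff.rfl
  have hRs : ∀ l v, R (l + 1) v ↔ R l (t v) ∨ R l (m v) := fun _ _ => Iff.rfl
  have hex : ∀ v, ∃ l, R l v := by
    have key : ∀ x ∈ D, ∀ v, (∃ l, R l v) → ∃ l, R l (x.1 v) := by
      have kt : ∀ v, (∃ l, R l v) → ∃ l, R l (t v) := fun v ⟨l, h⟩ =>
        ⟨l + 1, (hRs _ _).2 (Or.inl (by rwa [ht]))⟩
      have km : ∀ v, (∃ l, R l v) → ∃ l, R l (m v) := fun v ⟨l, h⟩ =>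
        ⟨l + 1, (hRs _ _).2 (Or.inr (by rwa [hm]))⟩
      intro x hx
      induction hx using Subgroup.closure_induction_left with
      | one => exact fun v h => h
      | mul_left x hx y hy ih =>
        rcases hx with rfl | rfl
        · exact fun v h => kt _ (ih v h)
        · exact fun v h => km _ (ih v h)
      | inv_mul_cancel x hx y hy ih =>
        rcases hx with rfl | rfl
        · rw [Prod.inv_mk, htI, hmI]; exact fun v h => kt _ (ih v h)
        · rw [Prod.inv_mk, htI, hmI]; exact fun v h => km _ (ih v h)
    intro v
    obtain ⟨a, c, h, e⟩ := h7 v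
    rw [← e]
    exact key _ h _ ⟨0, h4 v⟩
  clear_value R
  classical
  let d : V → ℕ := fun v => Nat.find (hex v)
  refine ⟨σ, b, d, h1, fun v => h2 _ _ v hD1, fun v => h3 _ _ v hD1,
    fun v => h3 _ _ v hD2, h4, h5, h6, fun v hv => ?_⟩
  have hs : R (d v) v := Nat.find_spec (p := fun l => R l v) (hex v)
  have hmin : ∀ w l, R l w → d w ≤ l := fun w l h => Nat.find_min' (hex w) h
  have hpos : d v ≠ 0 := fun h0 => hv (by rw [h0] at hs; exact (hR0 v).1 hs)
  obtain ⟨l, hl⟩ := Nat.exists_eq_succ_of_ne_zero hpos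
  rw [hl] at hs
  rcases (hRs l v).1 hs with h | h
  · left
    have := hmin _ _ h
    omega
  · right
    have := hmin _ _ h
    omega

/-! ### The anti-involution of the group algebra of the wreath product -/

/-- The base group `G^m` inside the group algebra of `G ≀ S_m`. -/
noncomputable def baseElt (G : Type) [Group G] (m : ℕ) :
    (Fin m → G) →* MonoidAlgebra ℂ (SGW G m) :=
  (MonoidAlgebra.of ℂ (SGW G m)).comp SemidirectProduct.inl

/-- The symmetric group inside the group algebra of `G ≀ S_m`. -/
noncomputable def permElt (G : Type) [Group G] (m : ℕ) :
    Equiv.Perm (Fin m) →* MonoidAlgebra ℂ (SGW G m) :=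
  (MonoidAlgebra.of ℂ (SGW G m)).comp SemidirectProduct.inr

/-- The copy of `ℂ[G]` sitting at the coordinate `v` of the base group. -/
noncomputable def slot (G : Type) [Group G] (m : ℕ) (v : Fin m) :
    MonoidAlgebra ℂ G →ₐ[ℂ] MonoidAlgebra ℂ (SGW G m) :=
  MonoidAlgebra.lift ℂ _ G ((baseElt G m).comp (MonoidHom.mulSingle (fun _ => G) v))

section Wreath

variable {G : Type} [Group G] {m : ℕ}

lemma slot_single (v : Fin m) (g : G) :
    slot G m v (MonoidAlgebra.single g 1) = baseElt G m (Pi.mulSingle v g) := by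
  rw [slot, MonoidAlgebra.lift_single, one_smul]; rfl

lemma of_eq_base_mul_perm (w : SGW G m) :
    MonoidAlgebra.single w (1 : ℂ) = baseElt G m w.left * permElt G m w.right := by
  change _ = MonoidAlgebra.of ℂ _ _ * MonoidAlgebra.of ℂ _ _
  rw [← map_mul, SemidirectProduct.inl_left_mul_inr_right]; rfl

lemma permElt_mul_baseElt (s : Equiv.Perm (Fin m)) (y : Fin m → G) :
    permElt G m s * baseElt G m y = baseElt G m (y ∘ s.symm) * permElt G m s := by
  change MonoidAlgebra.of ℂ _ _ * MonoidAlgebra.of ℂ _ _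
    = MonoidAlgebra.of ℂ _ _ * MonoidAlgebra.of ℂ _ _
  rw [← map_mul, ← map_mul]
  congr 1
  have := SemidirectProduct.inl_aut (φ := permPiAut (Fin m) G) s y
  change SemidirectProduct.inl (y ∘ s.symm) = _ at this
  rw [this, mul_assoc, ← map_mul, inv_mul_cancel, map_one, mul_one]

/-- Two linear maps on a group algebra agree if they agree on group elements. -/
lemma groupAlgebra_ext {K : Type*} {M : Type*} [Group K] [AddCommMonoid M] [Module ℂ M]
    {f g : MonoidAlgebra ℂ K →ₗ[ℂ] M}
    (h : ∀ k, f (MonoidAlgebra.single k 1) = g (MonoidAlgebra.single k 1))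
    (a : MonoidAlgebra ℂ K) : f a = g a := by
  induction a using MonoidAlgebra.induction_linear with
  | zero => simp
  | add x y hx hy => rw [map_add, map_add, hx, hy]
  | single k r =>
    have : MonoidAlgebra.single k r = r • MonoidAlgebra.single k (1 : ℂ) := by
      simp [MonoidAlgebra.smul_single]
    rw [this, map_smul, map_smul, h]

lemma permElt_mul_slot (s : Equiv.Perm (Fin m)) (v : Fin m) (a : MonoidAlgebra ℂ G) :
    permElt G m s * slot G m v a = slot G m (s v) a * permElt G m s := by
  refine groupAlgebra_ext (f := (LinearMap.mulLeft ℂ (permElt G m s)) ∘ₗ (slot G m v).toLinearMap)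
    (g := (LinearMap.mulRight ℂ (permElt G m s)) ∘ₗ (slot G m (s v)).toLinearMap) (fun g => ?_) a
  change permElt G m s * slot G m v _ = slot G m (s v) _ * permElt G m s
  rw [slot_single, slot_single, permElt_mul_baseElt]
  congr 2
  funext w
  simp only [Function.comp, Pi.mulSingle_apply, Equiv.symm_apply_eq]

lemma baseElt_mul_slot (y : Fin m → G) (v : Fin m) (a : MonoidAlgebra ℂ G) :
    baseElt G m y * slot G m v a
      = slot G m v (MonoidAlgebra.single (y v) 1 * a * MonoidAlgebra.single (y v)⁻¹ 1)
        * baseElt G m y := by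
  refine groupAlgebra_ext (f := (LinearMap.mulLeft ℂ (baseElt G m y)) ∘ₗ (slot G m v).toLinearMap)
    (g := (LinearMap.mulRight ℂ (baseElt G m y)) ∘ₗ (slot G m v).toLinearMap ∘ₗ
      (LinearMap.mulRight ℂ (MonoidAlgebra.single (y v)⁻¹ 1)) ∘ₗ
      (LinearMap.mulLeft ℂ (MonoidAlgebra.single (y v) 1))) (fun g => ?_) a
  change baseElt G m y * slot G m v _ = slot G m v (_ * _ * _) * baseElt G m y
  rw [MonoidAlgebra.single_mul_single, MonoidAlgebra.single_mul_single, one_mul, one_mul,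
    slot_single, slot_single, ← map_mul, ← map_mul]
  congr 1
  funext w
  by_cases h : w = v
  · subst h; simp
  · simp [h]

lemma slot_commute {v w : Fin m} (h : v ≠ w) (a b : MonoidAlgebra ℂ G) :
    slot G m v a * slot G m w b = slot G m w b * slot G m v a := by
  refine groupAlgebra_ext (f := (LinearMap.mulRight ℂ (slot G m w b)) ∘ₗ (slot G m v).toLinearMap)
    (g := (LinearMap.mulLeft ℂ (slot G m w b)) ∘ₗ (slot G m v).toLinearMap) (fun g => ?_) a
  change slot G m v _ * slot G m w b = slot G m w b * slot G m v _
  rw [slot_single, baseElt_mul_slot]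
  simp [Pi.mulSingle_eq_of_ne h.symm, ← MonoidAlgebra.one_def]

lemma exists_hom_of_commute {M : Type*} [Monoid M] (f : Fin m → G →* M)
    (hcomm : Pairwise fun v w => ∀ x y, Commute (f v x) (f w y)) :
    ∃ P : (Fin m → G) →* M, ∀ v g, P (Pi.mulSingle v g) = f v g :=
  ⟨MonoidHom.noncommPiCoprod f hcomm, fun v g =>
    MonoidHom.noncommPiCoprod_mulSingle (N := fun _ : Fin m => G) (ϕ := f) (hcomm := hcomm) v g⟩

lemma exists_base_antiHom (φ : MonoidAlgebra ℂ G →ₗ[ℂ] MonoidAlgebra ℂ G) (hφ : IsAntiInv φ) :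
    ∃ P : (Fin m → G) →* (MonoidAlgebra ℂ (SGW G m))ᵐᵒᵖ, ∀ v g,
      P (Pi.mulSingle v g) = MulOpposite.op (slot G m v (φ (MonoidAlgebra.single g 1))) := by
  let f : ∀ _ : Fin m, G →* (MonoidAlgebra ℂ (SGW G m))ᵐᵒᵖ := fun v =>
    { toFun := fun g => MulOpposite.op (slot G m v (φ (MonoidAlgebra.single g 1)))
      map_one' := by
        rw [← MonoidAlgebra.one_def, hφ.map_one, map_one]; rfl
      map_mul' := fun g h => by
        rw [← MulOpposite.op_mul, ← map_mul, ← hφ.map_mul, MonoidAlgebra.single_mul_single,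
          one_mul] }
  have hf : ∀ v g, f v g = MulOpposite.op (slot G m v (φ (MonoidAlgebra.single g 1))) :=
    fun _ _ => rfl
  have hcomm : Pairwise fun v w => ∀ x y, Commute (f v x) (f w y) := by
    intro v w hvw x y
    rw [hf, hf, Commute, SemiconjBy, ← MulOpposite.op_mul, ← MulOpposite.op_mul,
      slot_commute hvw]
  exact exists_hom_of_commute f hcomm

lemma exists_wreath_antiHom (φ : MonoidAlgebra ℂ G →ₗ[ℂ] MonoidAlgebra ℂ G) (hφ : IsAntiInv φ) :
    ∃ F : SGW G m →* (MonoidAlgebra ℂ (SGW G m))ᵐᵒᵖ,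
      (∀ s, F (SemidirectProduct.inr s) = MulOpposite.op (permElt G m s⁻¹)) ∧ ∀ v g,
      F (SemidirectProduct.inl (Pi.mulSingle v g))
        = MulOpposite.op (slot G m v (φ (MonoidAlgebra.single g 1))) := by
  obtain ⟨P, hP⟩ := exists_base_antiHom (m := m) φ hφ
  let Q : Equiv.Perm (Fin m) →* (MonoidAlgebra ℂ (SGW G m))ᵐᵒᵖ :=
    { toFun := fun s => MulOpposite.op (permElt G m s⁻¹)
      map_one' := by simp
      map_mul' := fun s s' => by rw [← MulOpposite.op_mul, ← map_mul, mul_inv_rev] }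
  have hQ : ∀ s, Q s = MulOpposite.op (permElt G m s⁻¹) := fun _ => rfl
  have hPQ : ∀ s y, Q s * P y = P (permPiAut (Fin m) G s y) * Q s := by
    intro s
    let S : Submonoid (Fin m → G) :=
      { carrier := {y | Q s * P y = P (permPiAut (Fin m) G s y) * Q s}
        one_mem' := by simp
        mul_mem' := fun {y z} hy hz => by
          change Q s * P (y * z) = P (permPiAut (Fin m) G s (y * z)) * Q s
          rw [map_mul, map_mul, map_mul, ← mul_assoc, show Q s * P y = _ from hy, mul_assoc,
            show Q s * P z = _ from hz, mul_assoc] }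
    intro y
    refine Submonoid.pi_mem_of_mulSingle_mem (H := S) y fun v => ?_
    change Q s * P (Pi.mulSingle v (y v)) = P (permPiAut (Fin m) G s (Pi.mulSingle v (y v))) * Q s
    have e : permPiAut (Fin m) G s (Pi.mulSingle v (y v)) = Pi.mulSingle (s v) (y v) := by
      funext w
      change (Pi.mulSingle v (y v) : Fin m → G) (s.symm w) = _
      simp only [Pi.mulSingle_apply, Equiv.symm_apply_eq]
    rw [e, hP, hP, hQ, ← MulOpposite.op_mul, ← MulOpposite.op_mul, permElt_mul_slot]
    simp
  let F : SGW G m →* (MonoidAlgebra ℂ (SGW G m))ᵐᵒᵖ :=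
    { toFun := fun w => P w.left * Q w.right
      map_one' := by simp
      map_mul' := fun w w' => by
        rw [SemidirectProduct.mul_left, SemidirectProduct.mul_right, map_mul, map_mul,
          mul_assoc, ← mul_assoc _ (Q w.right), ← hPQ]
        simp only [mul_assoc] }
  refine ⟨F, fun s => ?_, fun v g => ?_⟩
  · change P 1 * Q s = _
    rw [map_one, one_mul, hQ]
  · change P (Pi.mulSingle v g) * Q 1 = _
    rw [hP, map_one, mul_one]

/-- An anti-involution `φ` of `ℂ[G]` extends to one of `ℂ[G ≀ S_m]`, acting by `φ` on every
coordinate of the base group and by inversion on the symmetric group. -/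
lemma exists_wreath_antiInv (φ : MonoidAlgebra ℂ G →ₗ[ℂ] MonoidAlgebra ℂ G) (hφ : IsAntiInv φ) :
    ∃ Φ : MonoidAlgebra ℂ (SGW G m) →ₗ[ℂ] MonoidAlgebra ℂ (SGW G m), IsAntiInv Φ ∧
      (∀ s, Φ (permElt G m s) = permElt G m s⁻¹) ∧
      ∀ v a, Φ (slot G m v a) = slot G m v (φ a) := by
  obtain ⟨F, hF1, hF2⟩ := exists_wreath_antiHom (m := m) φ hφ
  let L := MonoidAlgebra.lift ℂ _ (SGW G m) F
  let Φ : MonoidAlgebra ℂ (SGW G m) →ₗ[ℂ] MonoidAlgebra ℂ (SGW G m) :=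
    (MulOpposite.opLinearEquiv ℂ).symm.toLinearMap ∘ₗ L.toLinearMap
  have hΦ : ∀ a, Φ a = MulOpposite.unop (L a) := fun _ => rfl
  have hΦ1 : Φ 1 = 1 := by rw [hΦ, map_one, MulOpposite.unop_one]
  have hΦm : ∀ a b, Φ (a * b) = Φ b * Φ a := fun a b => by rw [hΦ, map_mul, MulOpposite.unop_mul, hΦ, hΦ]
  have hΦp : ∀ s, Φ (permElt G m s) = permElt G m s⁻¹ := by
    intro s
    change MulOpposite.unop (L (MonoidAlgebra.single (SemidirectProduct.inr s) 1)) = _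
    rw [MonoidAlgebra.lift_single, one_smul, hF1, MulOpposite.unop_op]
  have hΦs : ∀ v a, Φ (slot G m v a) = slot G m v (φ a) := by
    intro v a
    refine groupAlgebra_ext (f := Φ ∘ₗ (slot G m v).toLinearMap)
      (g := (slot G m v).toLinearMap ∘ₗ φ) (fun g => ?_) a
    change Φ (slot G m v _) = slot G m v (φ _)
    rw [slot_single]
    change MulOpposite.unop (L (MonoidAlgebra.single (SemidirectProduct.inl _) 1)) = _
    rw [MonoidAlgebra.lift_single, one_smul, hF2, MulOpposite.unop_op]
  refine ⟨Φ, ⟨hΦ1, hΦm, fun a => ?_⟩, hΦp, hΦs⟩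
  refine groupAlgebra_ext (f := Φ ∘ₗ Φ) (g := LinearMap.id) (fun w => ?_) a
  change Φ (Φ _) = _
  rw [of_eq_base_mul_perm, hΦm, hΦm, hΦp, hΦp, inv_inv]
  congr 1
  let S : Submonoid (Fin m → G) :=
    { carrier := {y | Φ (Φ (baseElt G m y)) = baseElt G m y}
      one_mem' := by simp [hΦ1]
      mul_mem' := fun {y z} hy hz => by
        change Φ (Φ (baseElt G m (y * z))) = baseElt G m (y * z)
        rw [map_mul, hΦm, hΦm, show Φ (Φ (baseElt G m y)) = _ from hy,
          show Φ (Φ (baseElt G m z)) = _ from hz] }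
  refine Submonoid.pi_mem_of_mulSingle_mem (H := S) _ fun v => ?_
  change Φ (Φ (baseElt G m _)) = baseElt G m _
  rw [← slot_single, hΦs, hΦs, hφ.invol]

end Wreath

/-! ### Characters of the hyperoctahedral group and idempotents of linear characters -/

/-- Linear characters of the hyperoctahedral group are real: every element is conjugate to its
inverse. -/
lemma hyperoctahedral_char_inv {n : ℕ} (π : ↥(hyperoctahedral n) →* ℂˣ)
    (h : ↥(hyperoctahedral n)) : π h⁻¹ = π h := by
  have hth : Commute (tperm n) h.1 := Subgroup.mem_centralizer_iff.mp h.2 (tperm n) rfl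
  -- the commutative group generated by `t` and `h`, each element paired with its inverse
  let D : Subgroup (Equiv.Perm (Fin (2 * n)) × Equiv.Perm (Fin (2 * n))) :=
    { carrier := {x | ∃ i j : ℤ, x = (tperm n ^ i * h.1 ^ j, tperm n ^ (-i) * h.1 ^ (-j))}
      one_mem' := ⟨0, 0, by simp; rfl⟩
      mul_mem' := by
        rintro _ _ ⟨i, j, rfl⟩ ⟨k, l, rfl⟩
        refine ⟨i + k, j + l, ?_⟩
        rw [Prod.mk_mul_mk, neg_add, neg_add, zpow_add, zpow_add, zpow_add, zpow_add,
          Commute.mul_mul_mul_comm (hth.zpow_zpow k j).symm,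
          Commute.mul_mul_mul_comm (hth.zpow_zpow (-k) (-j)).symm]
      inv_mem' := by
        rintro _ ⟨i, j, rfl⟩
        refine ⟨-i, -j, ?_⟩
        rw [Prod.inv_mk, mul_inv_rev, mul_inv_rev, ← zpow_neg, ← zpow_neg, ← zpow_neg, ← zpow_neg,
          (hth.zpow_zpow (-i) (-j)).eq, (hth.zpow_zpow (- -i) (- -j)).eq] }
  have hD : ∀ a c, (a, c) ∈ D → c = a⁻¹ := by
    rintro a c ⟨i, j, e⟩
    rw [Prod.mk.injEq] at e
    rw [e.1, e.2, mul_inv_rev, ← zpow_neg, ← zpow_neg, (hth.zpow_zpow (-i) (-j)).eq]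
  have hinv : ∀ a c, (a, c) ∈ D → (c, a) ∈ D := by
    intro a c hac
    have e := hD a c hac
    have h2 := D.inv_mem hac
    rw [Prod.inv_mk, e, inv_inv] at h2
    rw [e]
    exact h2
  obtain ⟨u, -, huu, hu, -⟩ := exists_twisting_involution D hinv (by
    intro a c p hac hp
    rw [hD a c hac, Equiv.Perm.inv_eq_iff_eq, hp])
  have ht : ∀ v, u (tperm n v) = tperm n (u v) := by
    intro v
    have h1 := hu _ _ v (show (tperm n ^ (1 : ℤ) * h.1 ^ (0 : ℤ), tperm n ^ (-1 : ℤ) * h.1 ^ (-0 : ℤ))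
      ∈ D from ⟨1, 0, rfl⟩)
    simp only [zpow_one, zpow_zero, mul_one, neg_zero, zpow_neg] at h1
    rw [h1, Equiv.Perm.inv_eq_iff_eq]
    exact (tfun_involutive n _).symm
  have hh : ∀ v, u (h.1 v) = h.1⁻¹ (u v) := by
    intro v
    have h1 := hu _ _ v (show (tperm n ^ (0 : ℤ) * h.1 ^ (1 : ℤ), tperm n ^ (-0 : ℤ) * h.1 ^ (-1 : ℤ))
      ∈ D from ⟨0, 1, rfl⟩)
    simpa only [zpow_one, zpow_zero, one_mul, neg_zero, zpow_neg] using h1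
  have hmem : u ∈ hyperoctahedral n := by
    rw [hyperoctahedral, Subgroup.mem_centralizer_iff]
    rintro _ rfl
    exact Equiv.ext fun v => (ht v).symm
  have key : (⟨u, hmem⟩ : hyperoctahedral n) * h = h⁻¹ * ⟨u, hmem⟩ :=
    Subtype.ext (Equiv.ext fun v => hh v)
  have := congrArg π key
  rw [map_mul, map_mul, mul_comm] at this
  exact (mul_right_cancel this).symm

/-- The idempotent `|H|⁻¹ ∑ χ(h)⁻¹ h` attached to a linear character `χ` of a finite subgroup. -/
noncomputable def charIdem {W : Type} [Group W] (H : Subgroup W) [Fintype H] (χ : H →* ℂˣ) :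
    MonoidAlgebra ℂ W :=
  (Fintype.card H : ℂ)⁻¹ • ∑ h : H, ((χ h)⁻¹ : ℂˣ).1 • MonoidAlgebra.single h.1 (1 : ℂ)

section CharIdem

variable {W : Type} [Group W] (H : Subgroup W) [Fintype H] (χ : H →* ℂˣ)

lemma single_mul_charIdem (k : H) :
    MonoidAlgebra.single k.1 (1 : ℂ) * charIdem H χ = (χ k : ℂ) • charIdem H χ := by
  rw [charIdem, mul_smul_comm, smul_comm]
  congr 1
  rw [Finset.mul_sum, Finset.smul_sum]
  refine Fintype.sum_equiv (Equiv.mulLeft k) _ _ fun h => ?_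
  simp only [Equiv.coe_mulLeft, mul_smul_comm, MonoidAlgebra.single_mul_single, smul_smul]
  simp [mul_left_comm _ ((χ h : ℂ))⁻¹]

lemma charIdem_mul_single (k : H) :
    charIdem H χ * MonoidAlgebra.single k.1 (1 : ℂ) = (χ k : ℂ) • charIdem H χ := by
  rw [charIdem, smul_mul_assoc, smul_comm]
  congr 1
  rw [Finset.sum_mul, Finset.smul_sum]
  refine Fintype.sum_equiv (Equiv.mulRight k) _ _ fun h => ?_
  simp only [Equiv.coe_mulRight, smul_mul_assoc, MonoidAlgebra.single_mul_single, smul_smul]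
  simp [mul_comm]

lemma charIdem_mul_eq (z : MonoidAlgebra ℂ W)
    (hz : ∀ k : H, MonoidAlgebra.single k.1 (1 : ℂ) * z = (χ k : ℂ) • z) :
    charIdem H χ * z = z := by
  rw [charIdem, smul_mul_assoc, Finset.sum_mul]
  simp only [smul_mul_assoc, hz, smul_smul, Units.inv_mul, one_smul, Finset.sum_const,
    Finset.card_univ]
  rw [← Nat.cast_smul_eq_nsmul ℂ, smul_smul, inv_mul_cancel₀ (by simp), one_smul]

lemma charIdem_idem : charIdem H χ * charIdem H χ = charIdem H χ :=
  charIdem_mul_eq H χ _ (single_mul_charIdem H χ)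

end CharIdem

/-! ### The character `Θ_{ξ,π}` -/

section Theta

/-- The even vertex `2i`. -/
def dbl {n : ℕ} (i : Fin n) : Fin (2 * n) := ⟨2 * i.val, by have := i.isLt; omega⟩

/-- The index of the pair `{2i, 2i+1}` containing a vertex. -/
def half {n : ℕ} (v : Fin (2 * n)) : Fin n := ⟨v.val / 2, by have := v.isLt; omega⟩

lemma half_dbl {n : ℕ} (i : Fin n) : half (dbl i) = i := Fin.ext (by simp [half, dbl])

lemma half_tperm {n : ℕ} (v : Fin (2 * n)) : half (tperm n v) = half v := by
  apply Fin.ext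
  rw [tperm_apply, tfun]
  split_ifs with h <;> simp only [half] <;> omega

lemma eq_or_eq_tperm {n : ℕ} {v w : Fin (2 * n)} (h : half v = half w) :
    v = w ∨ v = tperm n w := by
  have h' : v.val / 2 = w.val / 2 := congrArg Fin.val h
  rw [tperm_apply, tfun, Fin.ext_iff]
  split_ifs with h1
  · rw [Fin.ext_iff]; simp only; omega
  · rw [Fin.ext_iff]; simp only; omega

lemma tperm_ne {n : ℕ} (v : Fin (2 * n)) : tperm n v ≠ v := by
  intro h
  have h' := congrArg Fin.val h
  rw [tperm_apply, tfun] at h'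
  split_ifs at h' with h1 <;> simp only at h' <;> omega

lemma tperm_tperm {n : ℕ} (v : Fin (2 * n)) : tperm n (tperm n v) = v := tfun_involutive n v

lemma eq_dbl_half {G : Type} {n : ℕ} {y : Fin (2 * n) → G} (hy : ∀ v, y (tperm n v) = y v)
    (v : Fin (2 * n)) : y v = y (dbl (half v)) := by
  rcases eq_or_eq_tperm (half_dbl (half v)) with h | h
  · rw [h]
  · rw [h, hy]

variable {G : Type} [Group G] {n : ℕ} (ξ : G →* ℂˣ) (π : ↥(hyperoctahedral n) →* ℂˣ)

/-- `Θ_{ξ,π}` as a group homomorphism. -/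
noncomputable def thetaHom : ↥(HGn G n) →* ℂˣ :=
  MonoidHom.mk' (ThetaFun G n ξ π) (by
    intro a b
    have hb : ∀ v, b.1.left (tperm n v) = b.1.left v := (paired_iff _).1 b.2.2
    have ha : a.1.right ∈ hyperoctahedral n := a.2.1
    have h1 : ∏ i, ξ (b.1.left (a.1.right.symm (dbl i))) = ∏ i, ξ (b.1.left (dbl i)) := by
      have hinj : Function.Injective fun i : Fin n => half (a.1.right.symm (dbl i)) := by
        intro i j hij
        rcases eq_or_eq_tperm hij with h | h
        · rw [← half_dbl i, a.1.right.symm.injective h, half_dbl]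
        · rw [← centralizer_comm_inv ha] at h
          rw [← half_dbl i, a.1.right.symm.injective h, half_tperm, half_dbl]
      refine Fintype.prod_bijective _ (Finite.injective_iff_bijective.1 hinj) _ _ fun i => ?_
      rw [eq_dbl_half hb]
    have h2 : ThetaFun G n ξ π (a * b) = (∏ i, ξ (a.1.left (dbl i)
        * b.1.left (a.1.right.symm (dbl i)))) * π (⟨a.1.right, a.2.1⟩ * ⟨b.1.right, b.2.1⟩) := rfl
    rw [h2, map_mul]
    simp only [map_mul]
    rw [Finset.prod_mul_distrib, h1, mul_mul_mul_comm]
    rfl)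

lemma thetaHom_apply (x : ↥(HGn G n)) : thetaHom ξ π x = ThetaFun G n ξ π x := rfl

lemma inl_mem_HGn {y : Fin (2 * n) → G} (hy : ∀ v, y (tperm n v) = y v) :
    (SemidirectProduct.inl y : SGW G (2 * n)) ∈ HGn G n :=
  ⟨Subgroup.one_mem _, (paired_iff _).2 hy⟩

lemma inr_mem_HGn {s : Equiv.Perm (Fin (2 * n))} (hs : s ∈ hyperoctahedral n) :
    (SemidirectProduct.inr s : SGW G (2 * n)) ∈ HGn G n :=
  ⟨hs, fun _ => rfl⟩

lemma thetaHom_inl {y : Fin (2 * n) → G} (hy : ∀ v, y (tperm n v) = y v) :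
    thetaHom ξ π ⟨_, inl_mem_HGn hy⟩ = ∏ i, ξ (y (dbl i)) := by
  rw [thetaHom_apply]
  change _ * π 1 = _
  rw [map_one, mul_one]
  rfl

lemma thetaHom_inr {s : Equiv.Perm (Fin (2 * n))} (hs : s ∈ hyperoctahedral n) :
    thetaHom ξ π (⟨_, inr_mem_HGn hs⟩ : HGn G n) = π ⟨s, hs⟩ := by
  rw [thetaHom_apply]
  change (∏ _i : Fin n, ξ 1) * π ⟨s, hs⟩ = _
  rw [map_one, Finset.prod_const_one, one_mul]

lemma mulSingle_comp_half (i : Fin n) (g : G) : (Pi.mulSingle i g ∘ half : Fin (2 * n) → G)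
    = Pi.mulSingle (dbl i) g * Pi.mulSingle (tperm n (dbl i)) g := by
  funext v
  have hne := tperm_ne (dbl i)
  by_cases hv : half v = i
  · rcases eq_or_eq_tperm (hv.trans (half_dbl i).symm) with rfl | rfl
    · simp [half_dbl, hne.symm]
    · simp [half_tperm, half_dbl, hne]
  · have n1 : v ≠ dbl i := fun h => hv (by rw [h, half_dbl])
    have n2 : v ≠ tperm n (dbl i) := fun h => hv (by rw [h, half_tperm, half_dbl])
    simp [hv, n1, n2]

lemma prod_mulSingle (i : Fin n) (g : G) :
    ∏ j, ξ ((Pi.mulSingle i g : Fin n → G) j) = ξ g := by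
  rw [Finset.prod_eq_single i]
  · simp
  · intro j _ hj; simp [hj]
  · simp

/-- An element of `ℂ[G ≀ S_{2n}]` transforms under `HG_n` by `Θ_{ξ,π}` as soon as it does so under
the diagonal copies of `G` in the pairs of coordinates and under `H_n`. -/
lemma theta_equivariant (z : MonoidAlgebra ℂ (SGW G (2 * n)))
    (h1 : ∀ i g, slot G (2 * n) (dbl i) (MonoidAlgebra.single g 1)
      * slot G (2 * n) (tperm n (dbl i)) (MonoidAlgebra.single g 1) * z = (ξ g : ℂ) • z)
    (h2 : ∀ s (hs : s ∈ hyperoctahedral n), permElt G (2 * n) s * z = (π ⟨s, hs⟩ : ℂ) • z)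
    (k : HGn G n) : MonoidAlgebra.single k.1 (1 : ℂ) * z = (thetaHom ξ π k : ℂ) • z := by
  have hb : ∀ y : Fin n → G, baseElt G (2 * n) (y ∘ half) * z = ((∏ i, ξ (y i) : ℂˣ) : ℂ) • z := by
    intro y
    let S : Submonoid (Fin n → G) :=
      { carrier := {y | baseElt G (2 * n) (y ∘ half) * z = ((∏ i, ξ (y i) : ℂˣ) : ℂ) • z}
        one_mem' := by
          change baseElt G (2 * n) 1 * z = ((∏ i, ξ 1 : ℂˣ) : ℂ) • z
          simp
        mul_mem' := fun {y w} hy hw => by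
          change baseElt G (2 * n) ((y ∘ half) * (w ∘ half)) * z
            = ((∏ i, ξ (y i * w i) : ℂˣ) : ℂ) • z
          have hy' : baseElt G (2 * n) (y ∘ half) * z = _ := hy
          have hw' : baseElt G (2 * n) (w ∘ half) * z = _ := hw
          simp only [map_mul]
          rw [mul_assoc, hw', mul_smul_comm, hy', smul_smul, Finset.prod_mul_distrib,
            Units.val_mul, mul_comm (Units.val _)] }
    refine Submonoid.pi_mem_of_mulSingle_mem (H := S) y fun i => ?_
    change baseElt G (2 * n) (Pi.mulSingle i (y i) ∘ half) * z
      = ((∏ j, ξ ((Pi.mulSingle i (y i) : Fin n → G) j) : ℂˣ) : ℂ) • z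
    rw [mulSingle_comp_half, prod_mulSingle, map_mul, ← slot_single, ← slot_single, h1]
  have hk : ∀ v, k.1.left (tperm n v) = k.1.left v := (paired_iff _).1 k.2.2
  have e : k.1.left = (fun i => k.1.left (dbl i)) ∘ half := funext fun v => eq_dbl_half hk v
  have hb' := hb (fun i => k.1.left (dbl i))
  rw [← e] at hb'
  rw [of_eq_base_mul_perm, mul_assoc, h2 _ k.2.1, mul_smul_comm, hb', smul_smul, ← Units.val_mul,
    mul_comm (π _)]
  rfl

end Theta

/-! ### The idempotent of `Θ_{ξ,π}` -/

section Fixed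

variable {G : Type} [Group G] {n : ℕ} (ξ : G →* ℂˣ) (π : ↥(hyperoctahedral n) →* ℂˣ)
  [Fintype (HGn G n)]

/-- The idempotent of `ℂ[SG_{2n}]` attached to `Θ_{ξ,π}`. -/
noncomputable def thetaIdem : MonoidAlgebra ℂ (SGW G (2 * n)) :=
  charIdem (HGn G n) (thetaHom ξ π)

lemma baseElt_mul_thetaIdem {y : Fin (2 * n) → G} (hy : ∀ v, y (tperm n v) = y v) :
    baseElt G (2 * n) y * thetaIdem ξ π
      = ((∏ i, ξ (y (dbl i)) : ℂˣ) : ℂ) • thetaIdem ξ π := by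
  rw [← thetaHom_inl ξ π hy]
  exact single_mul_charIdem (HGn G n) (thetaHom ξ π) ⟨_, inl_mem_HGn hy⟩

lemma thetaIdem_mul_baseElt {y : Fin (2 * n) → G} (hy : ∀ v, y (tperm n v) = y v) :
    thetaIdem ξ π * baseElt G (2 * n) y
      = ((∏ i, ξ (y (dbl i)) : ℂˣ) : ℂ) • thetaIdem ξ π := by
  rw [← thetaHom_inl ξ π hy]
  exact charIdem_mul_single (HGn G n) (thetaHom ξ π) ⟨_, inl_mem_HGn hy⟩

lemma permElt_mul_thetaIdem {s : Equiv.Perm (Fin (2 * n))} (hs : s ∈ hyperoctahedral n) :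
    permElt G (2 * n) s * thetaIdem ξ π = (π ⟨s, hs⟩ : ℂ) • thetaIdem ξ π := by
  rw [← thetaHom_inr (G := G) ξ π hs]
  exact single_mul_charIdem (HGn G n) (thetaHom ξ π) ⟨_, inr_mem_HGn hs⟩

lemma thetaIdem_mul_permElt {s : Equiv.Perm (Fin (2 * n))} (hs : s ∈ hyperoctahedral n) :
    thetaIdem ξ π * permElt G (2 * n) s = (π ⟨s, hs⟩ : ℂ) • thetaIdem ξ π := by
  rw [← thetaHom_inr (G := G) ξ π hs]
  exact charIdem_mul_single (HGn G n) (thetaHom ξ π) ⟨_, inr_mem_HGn hs⟩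

lemma thetaIdem_mul_pair (i : Fin n) (g : G) :
    thetaIdem ξ π * (slot G (2 * n) (dbl i) (MonoidAlgebra.single g 1)
      * slot G (2 * n) (tperm n (dbl i)) (MonoidAlgebra.single g 1))
      = (ξ g : ℂ) • thetaIdem ξ π := by
  rw [slot_single, slot_single, ← map_mul, ← mulSingle_comp_half,
    thetaIdem_mul_baseElt ξ π fun v => by simp only [Function.comp, half_tperm]]
  simp only [Function.comp, half_dbl, prod_mulSingle]

/-- The idempotent of `Θ_{ξ,π}` is fixed by the anti-involution: its image transforms by the same
character, because the pair idempotents `∑ ξ(g)⁻¹ g ⊗ g` are fixed and `π` is real. -/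
lemma thetaIdem_fixed [Fintype G] {φ : MonoidAlgebra ℂ G →ₗ[ℂ] MonoidAlgebra ℂ G}
    (hφ : ∀ (B : Type) [Ring B] [Algebra ℂ B] (j₁ j₂ : MonoidAlgebra ℂ G →ₗ[ℂ] B),
        ∑ g, (ξ g : ℂ)⁻¹ • (j₁ (φ (MonoidAlgebra.single g 1)) * j₂ (φ (MonoidAlgebra.single g 1)))
          = ∑ g, (ξ g : ℂ)⁻¹ • (j₁ (MonoidAlgebra.single g 1) * j₂ (MonoidAlgebra.single g 1)))
    {Φ : MonoidAlgebra ℂ (SGW G (2 * n)) →ₗ[ℂ] MonoidAlgebra ℂ (SGW G (2 * n))}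
    (hΦ : IsAntiInv Φ) (hΦp : ∀ s, Φ (permElt G (2 * n) s) = permElt G (2 * n) s⁻¹)
    (hΦs : ∀ v a, Φ (slot G (2 * n) v a) = slot G (2 * n) v (φ a)) :
    Φ (thetaIdem ξ π) = thetaIdem ξ π := by
  set e := thetaIdem (G := G) ξ π with he
  let p : Fin n → G → MonoidAlgebra ℂ (SGW G (2 * n)) := fun i g =>
    slot G (2 * n) (dbl i) (MonoidAlgebra.single g 1)
      * slot G (2 * n) (tperm n (dbl i)) (MonoidAlgebra.single g 1)
  have hpm : ∀ i g h, p i g * p i h = p i (g * h) := by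
    intro i g h
    simp only [p]
    rw [mul_assoc, ← mul_assoc (slot _ _ _ _) (slot G (2 * n) (dbl i) (MonoidAlgebra.single h 1)),
      slot_commute (tperm_ne (dbl i)), mul_assoc, ← mul_assoc, ← map_mul, ← map_mul,
      MonoidAlgebra.single_mul_single, one_mul]
  let E : Fin n → MonoidAlgebra ℂ (SGW G (2 * n)) := fun i => ∑ g, (ξ g : ℂ)⁻¹ • p i g
  have hE : ∀ i, Φ (E i) = E i := by
    intro i
    have h := hφ _ (slot G (2 * n) (dbl i)).toLinearMap (slot G (2 * n) (tperm n (dbl i))).toLinearMap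
    simp only [AlgHom.toLinearMap_apply] at h
    simp only [E, p, map_sum, map_smul, hΦ.map_mul, hΦs]
    rw [← h]
    exact Finset.sum_congr rfl fun g _ => by rw [slot_commute (tperm_ne (dbl i))]
  have heE : ∀ i, e * E i = (Fintype.card G : ℂ) • e := by
    intro i
    simp only [E, Finset.mul_sum, mul_smul_comm]
    have : ∀ g, (ξ g : ℂ)⁻¹ • (e * p i g) = e := fun g => by
      rw [thetaIdem_mul_pair, smul_smul, inv_mul_cancel₀ (ξ g).ne_zero, one_smul]
    simp only [this, Finset.sum_const, Finset.card_univ]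
    rw [Nat.cast_smul_eq_nsmul]
  have hpE : ∀ i g, p i g * E i = (ξ g : ℂ) • E i := by
    intro i g
    simp only [E, Finset.mul_sum, Finset.smul_sum]
    refine Fintype.sum_equiv (Equiv.mulLeft g) _ _ fun h => ?_
    rw [mul_smul_comm, hpm, smul_smul]
    simp [mul_left_comm _ ((ξ h : ℂ))⁻¹]
  have key : e * Φ e = Φ e := by
    refine charIdem_mul_eq _ _ _ (theta_equivariant ξ π _ (fun i g => ?_) fun s hs => ?_)
    · have h1 : E i * Φ e = (Fintype.card G : ℂ) • Φ e := by
        have := congrArg Φ (heE i)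
        rwa [hΦ.map_mul, hE, map_smul] at this
      have h2 : p i g * ((Fintype.card G : ℂ) • Φ e) = (ξ g : ℂ) • ((Fintype.card G : ℂ) • Φ e) := by
        rw [← h1, ← mul_assoc, hpE, smul_mul_assoc]
      rw [mul_smul_comm, smul_comm] at h2
      exact smul_right_injective _ (show (Fintype.card G : ℂ) ≠ 0 by simp) h2
    · have h1 := congrArg Φ (thetaIdem_mul_permElt (G := G) ξ π ((hyperoctahedral n).inv_mem hs))
      rw [hΦ.map_mul, hΦp, inv_inv, map_smul] at h1
      rw [he, h1]
      congr 2
      exact hyperoctahedral_char_inv π ⟨s, hs⟩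
  have h2 := congrArg Φ key
  rw [hΦ.map_mul, hΦ.invol, key] at h2
  exact h2

end Fixed

/-! ### The Hecke algebra is fixed pointwise -/

/-- Moving a value of `x` from `v` to a vertex `w` closer to the base decreases the total distance
of the support to the base. -/
lemma weight_lt {V G : Type} [Fintype V] [DecidableEq V] [Group G] [DecidableEq G] (d : V → ℕ)
    {x x' : V → G} {v w : V} (hx : x v ≠ 1) (hx' : x' v = 1) (hd : d w < d v)
    (h : ∀ u, u ≠ v → u ≠ w → x' u = x u) :
    ∑ u, (if x' u = 1 then 0 else d u + 1) < ∑ u, (if x u = 1 then 0 else d u + 1) := by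
  have hvw : w ≠ v := fun h => by subst h; omega
  rw [← Finset.add_sum_erase _ _ (Finset.mem_univ v), ← Finset.add_sum_erase _ _ (Finset.mem_univ v),
    ← Finset.add_sum_erase (Finset.univ.erase v) _ (Finset.mem_erase.2 ⟨hvw, Finset.mem_univ w⟩),
    ← Finset.add_sum_erase (Finset.univ.erase v) _ (Finset.mem_erase.2 ⟨hvw, Finset.mem_univ w⟩),
    if_pos hx', if_neg hx]
  have e : ∑ u ∈ (Finset.univ.erase v).erase w, (if x' u = 1 then 0 else d u + 1)
      = ∑ u ∈ (Finset.univ.erase v).erase w, (if x u = 1 then 0 else d u + 1) := by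
    refine Finset.sum_congr rfl fun u hu => ?_
    simp only [Finset.mem_erase] at hu
    rw [h u hu.2.1 hu.1]
  rw [e]
  have : (if x' w = 1 then 0 else d w + 1) ≤ d w + 1 := by split_ifs <;> omega
  omega

section DoubleCoset

variable {G : Type} [Group G] {n : ℕ} (ξ : G →* ℂˣ) (π : ↥(hyperoctahedral n) →* ℂˣ)
  [Fintype (HGn G n)]

lemma sandwich_mul_left {y : Fin (2 * n) → G} (hy : ∀ v, y (tperm n v) = y v)
    (x : Fin (2 * n) → G) (k z : MonoidAlgebra ℂ (SGW G (2 * n))) :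
    thetaIdem ξ π * baseElt G (2 * n) (y * x) * k * z
      = ((∏ i, ξ (y (dbl i)) : ℂˣ) : ℂ) • (thetaIdem ξ π * baseElt G (2 * n) x * k * z) := by
  rw [map_mul, ← mul_assoc, thetaIdem_mul_baseElt ξ π hy]
  simp only [smul_mul_assoc]

lemma sandwich_mul_right {σ : Equiv.Perm (Fin (2 * n))} {y : Fin (2 * n) → G}
    (hy : ∀ v, y (σ (tperm n v)) = y (σ v))
    (x : Fin (2 * n) → G) {k : MonoidAlgebra ℂ (SGW G (2 * n))}
    (hk : ∀ y, baseElt G (2 * n) y * k = k * baseElt G (2 * n) y) :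
    thetaIdem ξ π * baseElt G (2 * n) (x * y) * k * (permElt G (2 * n) σ * thetaIdem ξ π)
      = ((∏ i, ξ (y (σ (dbl i))) : ℂˣ) : ℂ) •
        (thetaIdem ξ π * baseElt G (2 * n) x * k * (permElt G (2 * n) σ * thetaIdem ξ π)) := by
  have h1 := permElt_mul_baseElt σ (y ∘ σ)
  have e : (y ∘ σ) ∘ σ.symm = y := funext fun v => by simp
  rw [e] at h1
  have h2 := baseElt_mul_thetaIdem ξ π (y := y ∘ σ) hy
  simp only [Function.comp] at h2
  have h3 : baseElt G (2 * n) y * (permElt G (2 * n) σ * thetaIdem ξ π)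
      = ((∏ i, ξ (y (σ (dbl i))) : ℂˣ) : ℂ) • (permElt G (2 * n) σ * thetaIdem ξ π) := by
    rw [← mul_assoc, ← h1, mul_assoc]
    rw [h2, mul_smul_comm]
  calc _ = thetaIdem ξ π * baseElt G (2 * n) x * (baseElt G (2 * n) y * k) *
        (permElt G (2 * n) σ * thetaIdem ξ π) := by
        rw [map_mul]; simp only [mul_assoc]
    _ = thetaIdem ξ π * baseElt G (2 * n) x * k *
        (baseElt G (2 * n) y * (permElt G (2 * n) σ * thetaIdem ξ π)) := by
        rw [hk]; simp only [mul_assoc]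
    _ = _ := by rw [h3, mul_smul_comm]

/-- The elements `e x k σ e` are fixed by the anti-involution, where `σ` is the reflection of all
polygons in their base vertices.  Multiplication by functions constant on the edges of either
matching, which `e` absorbs, moves the support of `x` to the base vertices; averaging over
conjugation then turns the remaining coordinates into central elements, which are collected
in `k`. -/
lemma sandwich_fixed [Fintype G] {φ : MonoidAlgebra ℂ G →ₗ[ℂ] MonoidAlgebra ℂ G}
    (hφ : ∀ c, (∀ a, c * a = a * c) → φ c = c)
    {Φ : MonoidAlgebra ℂ (SGW G (2 * n)) →ₗ[ℂ] MonoidAlgebra ℂ (SGW G (2 * n))}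
    (hΦ : IsAntiInv Φ) (hΦp : ∀ s, Φ (permElt G (2 * n) s) = permElt G (2 * n) s⁻¹)
    (hΦs : ∀ v a, Φ (slot G (2 * n) v a) = slot G (2 * n) v (φ a))
    (hΦe : Φ (thetaIdem ξ π) = thetaIdem ξ π)
    (m σ : Equiv.Perm (Fin (2 * n))) (b : Fin (2 * n) → Fin (2 * n)) (d : Fin (2 * n) → ℕ)
    (hm : ∀ v, m (m v) = v)
    (hσ : ∀ v, σ (σ v) = v) (hσt : ∀ v, σ (tperm n v) = m (σ v))
    (hbt : ∀ v, b (tperm n v) = b v) (hσb : ∀ v, σ (b v) = b v)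
    (hbσ : ∀ v, b (σ v) = b v) (hd : ∀ v, b v ≠ v → d (tperm n v) < d v ∨ d (m v) < d v)
    (N : ℕ) : ∀ (x : Fin (2 * n) → G) (k : MonoidAlgebra ℂ (SGW G (2 * n))) [DecidableEq G],
      (∑ v, (if x v = 1 then 0 else d v + 1)) = N →
      (∀ y, baseElt G (2 * n) y * k = k * baseElt G (2 * n) y) →
      permElt G (2 * n) σ * k = k * permElt G (2 * n) σ → Φ k = k →
      Φ (thetaIdem ξ π * baseElt G (2 * n) x * k * (permElt G (2 * n) σ * thetaIdem ξ π))
        = thetaIdem ξ π * baseElt G (2 * n) x * k * (permElt G (2 * n) σ * thetaIdem ξ π) := by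
  induction N using Nat.strong_induction_on with
  | _ N ih =>
  intro x k _ hN hk hkσ hΦk
  subst hN
  by_cases hcase : ∃ v, x v ≠ 1 ∧ b v ≠ v
  · obtain ⟨v, hxv, hbv⟩ := hcase
    rcases hd v hbv with hdv | hdv
    · -- move the value at `v` to `t v`
      let y : Fin (2 * n) → G := fun w => if w = v ∨ w = tperm n v then (x v)⁻¹ else 1
      have hy : ∀ w, y (tperm n w) = y w := by
        intro w
        have : (tperm n w = v ∨ tperm n w = tperm n v) ↔ (w = v ∨ w = tperm n v) := by
          rw [(tperm n).injective.eq_iff, or_comm]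
          refine or_congr Iff.rfl ⟨fun h => ?_, fun h => ?_⟩
          · rw [← h, tperm_tperm]
          · rw [h, tperm_tperm]
        simp only [y, this]
      have h1 := ih _ (weight_lt d (x := x) (x' := y * x) hxv (by simp [y]) hdv
        (fun u h1 h2 => by simp [y, h1, h2])) (y * x) k rfl hk hkσ hΦk
      rw [sandwich_mul_left ξ π hy, map_smul] at h1
      exact smul_right_injective _ (Units.ne_zero _) h1
    · -- move the value at `v` to `m v`
      let y : Fin (2 * n) → G := fun w => if w = v ∨ w = m v then (x v)⁻¹ else 1
      have hy : ∀ w, y (σ (tperm n w)) = y (σ w) := by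
        intro w
        have : (m (σ w) = v ∨ m (σ w) = m v) ↔ (σ w = v ∨ σ w = m v) := by
          rw [m.injective.eq_iff, or_comm]
          refine or_congr Iff.rfl ⟨fun h => ?_, fun h => ?_⟩
          · rw [← h, hm]
          · rw [h, hm]
        simp only [y, hσt, this]
      have h1 := ih _ (weight_lt d (x := x) (x' := x * y) hxv (by simp [y]) hdv
        (fun u h1 h2 => by simp [y, h1, h2])) (x * y) k rfl hk hkσ hΦk
      rw [sandwich_mul_right ξ π hy x hk, map_smul] at h1
      exact smul_right_injective _ (Units.ne_zero _) h1
  · push Not at hcase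
    by_cases hx : ∃ v, x v ≠ 1
    · obtain ⟨v, hxv⟩ := hx
      have hbv := hcase v hxv
      let x₀ : Fin (2 * n) → G := Function.update x v 1
      let C : MonoidAlgebra ℂ G := ∑ u : G, MonoidAlgebra.single (u * x v * u⁻¹) 1
      have hC : ∀ a, C * a = a * C := by
        intro a
        refine groupAlgebra_ext (f := LinearMap.mulLeft ℂ C) (g := LinearMap.mulRight ℂ C)
          (fun g => ?_) a
        simp only [LinearMap.mulLeft_apply, LinearMap.mulRight_apply, C, Finset.sum_mul,
          Finset.mul_sum, MonoidAlgebra.single_mul_single, one_mul]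
        refine (Fintype.sum_equiv (Equiv.mulLeft g) _ _ fun u => ?_).symm
        simp [mul_assoc]
      let k' := slot G (2 * n) v C * k
      have hks : ∀ a, slot G (2 * n) v a * k = k * slot G (2 * n) v a := by
        intro a
        refine groupAlgebra_ext (f := LinearMap.mulRight ℂ k ∘ₗ (slot G (2 * n) v).toLinearMap)
          (g := LinearMap.mulLeft ℂ k ∘ₗ (slot G (2 * n) v).toLinearMap) (fun g => ?_) a
        change slot G (2 * n) v _ * k = k * slot G (2 * n) v _
        rw [slot_single, hk]
      have hk' : ∀ y, baseElt G (2 * n) y * k' = k' * baseElt G (2 * n) y := by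
        intro y
        have h1 : MonoidAlgebra.single (y v) 1 * C * MonoidAlgebra.single (y v)⁻¹ 1 = C := by
          rw [← hC, mul_assoc, MonoidAlgebra.single_mul_single, mul_inv_cancel, one_mul,
            ← MonoidAlgebra.one_def, mul_one]
        simp only [k']
        rw [← mul_assoc, baseElt_mul_slot, h1, mul_assoc, hk, mul_assoc]
      have hkσ' : permElt G (2 * n) σ * k' = k' * permElt G (2 * n) σ := by
        have h1 : σ v = v := by rw [← hbv, hσb]
        simp only [k']
        rw [← mul_assoc, permElt_mul_slot, h1, mul_assoc, hkσ, mul_assoc]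
      have hΦk' : Φ k' = k' := by
        simp only [k']
        rw [hΦ.map_mul, hΦk, hΦs, hφ C hC, hks]
      have h1 := ih (∑ w, (if x₀ w = 1 then 0 else d w + 1)) (by
        refine Finset.sum_lt_sum (fun w _ => ?_) ⟨v, Finset.mem_univ v, ?_⟩
        · by_cases h : w = v
          · subst h; simp [x₀]
          · simp [x₀, h]
        · simp [x₀, hxv]) x₀ k' rfl hk' hkσ' hΦk'
      have key : (Fintype.card G : ℂ) • (thetaIdem ξ π * baseElt G (2 * n) x * k *
            (permElt G (2 * n) σ * thetaIdem ξ π))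
          = thetaIdem ξ π * baseElt G (2 * n) x₀ * k' *
            (permElt G (2 * n) σ * thetaIdem ξ π) := by
        have hu : ∀ u : G, thetaIdem ξ π * baseElt G (2 * n) x₀ *
            (slot G (2 * n) v (MonoidAlgebra.single (u * x v * u⁻¹) 1) * k) *
            (permElt G (2 * n) σ * thetaIdem ξ π) = thetaIdem ξ π * baseElt G (2 * n) x * k *
            (permElt G (2 * n) σ * thetaIdem ξ π) := by
          intro u
          let y : Fin (2 * n) → G := fun w => if b w = v then u else 1
          have hy : ∀ w, y (tperm n w) = y w := fun w => by simp only [y, hbt]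
          have hyσ : ∀ w, y (σ w) = y w := fun w => by simp only [y, hbσ]
          have e : x₀ * Pi.mulSingle v (u * x v * u⁻¹) = (y * x) * y⁻¹ := by
            funext w
            by_cases hw : w = v
            · subst hw; simp [x₀, y, hbv]
            · by_cases hbw : b w = v
              · have : x w = 1 := by
                  by_contra h
                  exact hw ((hcase w h).symm.trans hbw)
                simp [x₀, y, hbw, hw, this]
              · simp [x₀, y, hbw, hw]
          have e' : thetaIdem ξ π * baseElt G (2 * n) x₀ *
              (baseElt G (2 * n) (Pi.mulSingle v (u * x v * u⁻¹)) * k) *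
              (permElt G (2 * n) σ * thetaIdem ξ π)
              = thetaIdem ξ π * baseElt G (2 * n) (x₀ * Pi.mulSingle v (u * x v * u⁻¹)) * k *
              (permElt G (2 * n) σ * thetaIdem ξ π) := by
            rw [map_mul]; simp only [mul_assoc]
          rw [slot_single, e', e,
            sandwich_mul_right ξ π (y := y⁻¹) (fun w => by simp [hyσ, hy]) _ hk,
            sandwich_mul_left ξ π hy, smul_smul, ← Units.val_mul]
          simp [hyσ]
        simp only [k', C, map_sum, Finset.sum_mul, Finset.mul_sum, hu, Finset.sum_const,
          Finset.card_univ]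
        rw [Nat.cast_smul_eq_nsmul]
      rw [← key, map_smul] at h1
      exact smul_right_injective _ (show (Fintype.card G : ℂ) ≠ 0 by simp) h1
    · push Not at hx
      have : x = 1 := funext hx
      have hσI : σ⁻¹ = σ := inv_eq_of_mul_eq_one_right (Equiv.ext hσ)
      rw [this, map_one, mul_one, hΦ.map_mul, hΦ.map_mul, hΦ.map_mul, hΦp, hσI, hΦe, hΦk,
        ← mul_assoc, mul_assoc _ _ k, hkσ]
      simp only [mul_assoc]

/-- Every element of the Hecke algebra `e ℂ[SG_{2n}] e` is fixed by the anti-involution. -/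
lemma hecke_fixed [Fintype G] {φ : MonoidAlgebra ℂ G →ₗ[ℂ] MonoidAlgebra ℂ G}
    (hφ : ∀ c, (∀ a, c * a = a * c) → φ c = c)
    {Φ : MonoidAlgebra ℂ (SGW G (2 * n)) →ₗ[ℂ] MonoidAlgebra ℂ (SGW G (2 * n))}
    (hΦ : IsAntiInv Φ) (hΦp : ∀ s, Φ (permElt G (2 * n) s) = permElt G (2 * n) s⁻¹)
    (hΦs : ∀ v a, Φ (slot G (2 * n) v a) = slot G (2 * n) v (φ a))
    (hΦe : Φ (thetaIdem ξ π) = thetaIdem ξ π) (X : MonoidAlgebra ℂ (SGW G (2 * n))) :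
    Φ (thetaIdem ξ π * X * thetaIdem ξ π) = thetaIdem ξ π * X * thetaIdem ξ π := by
  refine groupAlgebra_ext
    (f := Φ ∘ₗ LinearMap.mulRight ℂ (thetaIdem ξ π) ∘ₗ LinearMap.mulLeft ℂ (thetaIdem ξ π))
    (g := LinearMap.mulRight ℂ (thetaIdem ξ π) ∘ₗ LinearMap.mulLeft ℂ (thetaIdem ξ π))
    (fun w => ?_) X
  change Φ (thetaIdem ξ π * _ * thetaIdem ξ π) = thetaIdem ξ π * _ * thetaIdem ξ π
  classical
  let m : Equiv.Perm (Fin (2 * n)) := w.right * tperm n * w.right⁻¹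
  have hmv : ∀ v, m (w.right v) = w.right (tperm n v) := fun v => by simp [m]
  have hm : ∀ v, m (m v) = v := fun v => by simp [m, tperm_tperm]
  have hm0 : ∀ v, m v ≠ v := fun v h => by
    obtain ⟨u, rfl⟩ := w.right.surjective v
    rw [hmv] at h
    exact tperm_ne u (w.right.injective h)
  obtain ⟨σ, b, d, hσ, hσt, hbt, -, -, hσb, hbσ, hd⟩ :=
    exists_reflection (tperm n) m tperm_tperm hm tperm_ne hm0
  -- `w.right = σ h` with `h` centralizing `t`
  have hσI : σ⁻¹ = σ := inv_eq_of_mul_eq_one_right (Equiv.ext hσ)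
  have hmem : σ * w.right ∈ hyperoctahedral n := by
    rw [hyperoctahedral, Subgroup.mem_centralizer_iff]
    rintro _ rfl
    refine Equiv.ext fun v => ?_
    change tperm n (σ (w.right v)) = σ (w.right (tperm n v))
    apply σ.injective
    rw [hσt, hσ, hσ, hmv]
  have hw : w.right = σ * (σ * w.right) := Equiv.ext fun v => (hσ _).symm
  have h1 := sandwich_fixed ξ π hφ hΦ hΦp hΦs hΦe m σ b d hm hσ hσt hbt hσb hbσ hd _ w.left 1
    rfl (by simp) (by simp) hΦ.map_one
  have e : thetaIdem ξ π * MonoidAlgebra.single w 1 * thetaIdem ξ π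
      = (π ⟨_, hmem⟩ : ℂ) • (thetaIdem ξ π * baseElt G (2 * n) w.left * 1 *
        (permElt G (2 * n) σ * thetaIdem ξ π)) := by
    have h2 : permElt G (2 * n) w.right
        = permElt G (2 * n) σ * permElt G (2 * n) (σ * w.right) := by
      rw [← map_mul, ← hw]
    rw [of_eq_base_mul_perm, h2, mul_one]
    simp only [mul_assoc]
    rw [permElt_mul_thetaIdem ξ π hmem]
    simp only [mul_smul_comm]
  rw [e, map_smul, h1]

end DoubleCoset

/-! ### Multiplicities -/

section Multiplicity

/-- An idempotent `e` whose Hecke algebra `e B e` is commutative has trace at most one on a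
`B`-module in which every nonzero vector is cyclic: `e B e` acts on the range of `e` by scalars,
and transitively on its nonzero vectors. -/
lemma trace_idem_of_comm {B V : Type*} [Ring B] [Algebra ℂ B] [AddCommGroup V] [Module ℂ V]
    [FiniteDimensional ℂ V] (r : B →ₐ[ℂ] Module.End ℂ V) {e : B} (he : e * e = e)
    (hcomm : ∀ X Y, (e * X * e) * (e * Y * e) = (e * Y * e) * (e * X * e))
    (hcyc : ∀ v : V, v ≠ 0 → ∀ w, ∃ b, r b v = w) :
    LinearMap.trace ℂ V (r e) = 0 ∨ LinearMap.trace ℂ V (r e) = 1 := by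
  have hT : IsIdempotentElem (r e) := by rw [IsIdempotentElem, ← map_mul, he]
  have hU : ∀ u ∈ LinearMap.range (r e), r e u = u := fun u hu => by
    obtain ⟨v, rfl⟩ := hu
    rw [← Module.End.mul_apply, hT.eq]
  rw [(LinearMap.IsIdempotentElem.isProj_range _ hT).trace]
  by_cases hbot : LinearMap.range (r e) = ⊥
  · left
    rw [hbot, finrank_bot, Nat.cast_zero]
  right
  have hcyc' : ∀ u ∈ LinearMap.range (r e), u ≠ 0 → ∀ w ∈ LinearMap.range (r e),
      ∃ b, r (e * b * e) u = w := by
    intro u hu hu0 w hw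
    obtain ⟨b, hb⟩ := hcyc u hu0 w
    refine ⟨b, ?_⟩
    rw [map_mul, map_mul, Module.End.mul_apply, Module.End.mul_apply, hU u hu, hb, hU w hw]
  obtain ⟨u, hu, hu0⟩ := Submodule.exists_mem_ne_zero_of_ne_bot hbot
  have hscal : ∀ b, ∃ c : ℂ, ∀ w ∈ LinearMap.range (r e), r (e * b * e) w = c • w := by
    intro b
    have hmap : ∀ w ∈ LinearMap.range (r e), r (e * b * e) w ∈ LinearMap.range (r e) := by
      intro w _
      rw [mul_assoc, map_mul, Module.End.mul_apply]
      exact LinearMap.mem_range_self _ _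
    have : Nontrivial (LinearMap.range (r e)) := Submodule.nontrivial_iff_ne_bot.2 hbot
    obtain ⟨c, hc⟩ := Module.End.exists_eigenvalue ((r (e * b * e)).restrict hmap)
    obtain ⟨⟨v, hv⟩, hv1⟩ := hc.exists_hasEigenvector
    have hv2 : r (e * b * e) v = c • v := congrArg Subtype.val hv1.apply_eq_smul
    have hv0 : v ≠ 0 := fun h => hv1.2 (Subtype.ext h)
    refine ⟨c, fun w hw => ?_⟩
    obtain ⟨a, rfl⟩ := hcyc' v hv hv0 w hw
    rw [← Module.End.mul_apply, ← map_mul, hcomm, map_mul, Module.End.mul_apply, hv2, map_smul]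
  have h1 : Module.finrank ℂ (LinearMap.range (r e)) = 1 := by
    refine finrank_eq_one ⟨u, hu⟩ (fun h => hu0 (congrArg Subtype.val h)) fun w => ?_
    obtain ⟨b, hb⟩ := hcyc' u hu hu0 w.1 w.2
    obtain ⟨c, hc⟩ := hscal b
    exact ⟨c, Subtype.ext ((hc u hu).symm.trans hb)⟩
  rw [h1, Nat.cast_one]

/-- A nonzero invariant subspace of a simple object of `FDRep` is everything. -/
lemma invariant_eq_top {S : Type} [Group S] (ψ : FDRep ℂ S) [CategoryTheory.Simple ψ]
    (W : Submodule ℂ ψ) (hW : W ≠ ⊥) (hinv : ∀ g, ∀ w ∈ W, ψ.ρ g w ∈ W) : W = ⊤ := by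
  let ρW : Representation ℂ S W :=
    { toFun := fun g => (ψ.ρ g).restrict (hinv g)
      map_one' := by ext w; simp
      map_mul' := fun g h => by ext w; simp }
  let ι : FDRep.of ρW ⟶ ψ :=
    ⟨CategoryTheory.InducedCategory.homMk (ModuleCat.ofHom W.subtype), fun g => by ext; rfl⟩
  have hι : ∀ w : W, ι.hom.hom.hom w = w.1 := fun _ => rfl
  have hmono : CategoryTheory.Mono ι := by
    refine (CategoryTheory.forget (FDRep ℂ S)).mono_of_mono_map ?_
    rw [CategoryTheory.mono_iff_injective]
    exact Subtype.val_injective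
  have hne : ι ≠ 0 := by
    intro h
    apply hW
    rw [Submodule.eq_bot_iff]
    intro w hw
    have := hι ⟨w, hw⟩
    rw [h] at this
    exact this.symm
  have := CategoryTheory.isIso_of_mono_of_nonzero hne
  rw [eq_top_iff]
  intro v _
  have h1 : CategoryTheory.CategoryStruct.comp (CategoryTheory.inv ι) ι =
      CategoryTheory.CategoryStruct.id ψ := CategoryTheory.IsIso.inv_hom_id ι
  have h2 : ι.hom.hom.hom ((CategoryTheory.inv ι).hom.hom.hom v) = v :=
    congrArg (fun f : ψ ⟶ ψ => f.hom.hom.hom v) h1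
  rw [← h2, hι]
  exact Subtype.property _

lemma simple_cyclic {S : Type} [Group S] (ψ : FDRep ℂ S) [CategoryTheory.Simple ψ]
    (v : ψ) (hv : v ≠ 0) (w : ψ) :
    ∃ b : MonoidAlgebra ℂ S, Representation.asAlgebraHom ψ.ρ b v = w := by
  let W : Submodule ℂ ψ := LinearMap.range
    ((LinearMap.applyₗ v).comp (Representation.asAlgebraHom ψ.ρ).toLinearMap)
  have hW : W = ⊤ := by
    refine invariant_eq_top ψ W (fun h => hv ?_) ?_
    · have : v ∈ W := ⟨1, by simp⟩
      rwa [h, Submodule.mem_bot] at this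
    · rintro g _ ⟨b, rfl⟩
      refine ⟨MonoidAlgebra.single g 1 * b, ?_⟩
      simp
  have : w ∈ W := hW ▸ Submodule.mem_top
  exact this

/-- The trace of the idempotent of a linear character `χ` of a finite subgroup is the multiplicity
of `χ`. -/
lemma trace_charIdem {S : Type} [Group S] (H : Subgroup S) [Fintype H] (χ : H →* ℂˣ)
    (ψ : FDRep ℂ S) :
    LinearMap.trace ℂ ψ (Representation.asAlgebraHom ψ.ρ (charIdem H χ))
      = (Nat.card H : ℂ)⁻¹ * ∑ᶠ h : H, ψ.character h.val * (starRingEnd ℂ) (χ h : ℂ) := by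
  rw [finsum_eq_sum_of_fintype, Nat.card_eq_fintype_card, charIdem]
  simp only [map_smul, map_sum, smul_eq_mul]
  congr 1
  refine Finset.sum_congr rfl fun h _ => ?_
  have hstar : (starRingEnd ℂ) (χ h : ℂ) = ((χ h)⁻¹ : ℂˣ).1 := by
    have hn : ‖(χ h : ℂ)‖ = 1 := by
      refine Complex.norm_eq_one_of_pow_eq_one (n := Fintype.card H) ?_ Fintype.card_ne_zero
      rw [← Units.val_pow_eq_pow_val, ← map_pow, pow_card_eq_one, map_one, Units.val_one]
    rw [Units.val_inv_eq_inv_val, Complex.inv_eq_conj hn]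
  rw [hstar, Representation.asAlgebraHom_single, one_smul, mul_comm]
  rfl

end Multiplicity

/-- Let `G` be a finite group and `n ≥ 1`.  For every linear character `ξ`
of `G`, every linear character `π` of `Hₙ` and every irreducible character `ψ` of `SG_{2n}`,
the multiplicity `⟨Res_{HGₙ} ψ, Θ_{ξ,π}⟩ = (1/|HGₙ|) ∑_{h ∈ HGₙ} ψ(h)·conj(Θ_{ξ,π}(h))`
equals `0` or `1`; that is, `(SG_{2n}, HGₙ, Θ_{ξ,π})` is a Gelfand triple. -/
theorem gelfand_triple_SG2n (G : Type) [Group G] [Fintype G] (n : ℕ) (hn : 1 ≤ n)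
    (ξ : G →* ℂˣ) (π : ↥(hyperoctahedral n) →* ℂˣ)
    (ψ : FDRep ℂ (SGW G (2 * n))) [CategoryTheory.Simple ψ] :
    (Nat.card (HGn G n) : ℂ)⁻¹ *
        ∑ᶠ h : (HGn G n), ψ.character h.val *
          (starRingEnd ℂ) ((ThetaFun G n ξ π h : ℂ)) = 0 ∨
    (Nat.card (HGn G n) : ℂ)⁻¹ *
        ∑ᶠ h : (HGn G n), ψ.character h.val *
          (starRingEnd ℂ) ((ThetaFun G n ξ π h : ℂ)) = 1 := by
  have : Finite (SGW G (2 * n)) := Finite.of_equiv _ SemidirectProduct.equivProd.symm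
  have : Fintype (HGn G n) := Fintype.ofFinite _
  obtain ⟨φ, hφ, hφc, hφt⟩ := exists_groupAlgebra_antiInv ξ
  obtain ⟨Φ, hΦ, hΦp, hΦs⟩ := exists_wreath_antiInv (m := 2 * n) φ hφ
  have hΦe := thetaIdem_fixed ξ π hφt hΦ hΦp hΦs
  have hidem : thetaIdem ξ π * thetaIdem ξ π = thetaIdem ξ π := charIdem_idem _ _
  have hfix := hecke_fixed ξ π hφc hΦ hΦp hΦs hΦe
  have hcomm : ∀ X Y, (thetaIdem ξ π * X * thetaIdem ξ π) * (thetaIdem ξ π * Y * thetaIdem ξ π)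
      = (thetaIdem ξ π * Y * thetaIdem ξ π) * (thetaIdem ξ π * X * thetaIdem ξ π) := by
    intro X Y
    have h := hfix (X * thetaIdem ξ π * thetaIdem ξ π * Y)
    have e : thetaIdem ξ π * (X * thetaIdem ξ π * thetaIdem ξ π * Y) * thetaIdem ξ π
        = (thetaIdem ξ π * X * thetaIdem ξ π) * (thetaIdem ξ π * Y * thetaIdem ξ π) := by
      simp only [mul_assoc]
    rw [e, hΦ.map_mul, hfix, hfix] at h
    exact h.symm
  have key := trace_idem_of_comm (Representation.asAlgebraHom ψ.ρ) hidem hcomm (simple_cyclic ψ)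
  rw [thetaIdem, trace_charIdem] at key
  exact key
end

section
/- Let G be a finite group, η a linear character of G, and χ an irreducible character of G. Then for all x, y ∈ G: (1/|G|)·∑_{g∈G} χ(x⁻¹g)·η(y⁻¹g)·conj(χ(y⁻¹g))·η(g⁻¹) = η(y⁻¹)·χ(x⁻¹y)/χ(1). (This is the η̂-spherical function of the Gelfand triple (G×G, ΔG, η̂) attached to the irreducible component χ⊗(η⊗χ̄).) -/
/-!
Since `η` is multiplicative, `η(y⁻¹g) η(g⁻¹) = η(y⁻¹)`, and after the substitution `g = y h` the
claim becomes `(1/|G|) ∑ₕ χ(a h) conj(χ(h)) = χ(a)/χ(1)` with `a = x⁻¹ y`.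

The complex conjugate of `χ(h)` is `χ(h⁻¹)` (`character_inv_eq_conj`): averaging gives a
`G`-invariant positive definite Hermitian form `P`, which conjugates the matrix of `h⁻¹` into the
conjugate transpose of the matrix of `h`. The operator `T = ∑ₕ χ(h⁻¹) ρ(h)` commutes with `G`
because `χ` is a class function, so it is a scalar by Schur's lemma (`exists_smul_of_commute`).
Taking traces and using `∑ₕ χ(h) χ(h⁻¹) = |G|`, the scalar is `|G|/χ(1)`; the sum in question is
the trace of `ρ(a) T`.
-/

open scoped BigOperators ComplexOrder

open CategoryTheory

/-- Unitarizability in terms of matrices: the positive definite matrix `P = ∑ₖ M(k)ᴴ M(k)`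
satisfies `M(g)ᴴ P M(g) = P`. -/
theorem trace_inv_eq_star_trace {G n : Type} [Group G] [Fintype G] [Fintype n] [DecidableEq n]
    (M : G →* Matrix n n ℂ) (g : G) : (M g⁻¹).trace = star (M g).trace := by
  set P : Matrix n n ℂ := ∑ k : G, (M k).conjTranspose * M k with hP
  have hPos : P.PosDef := by
    refine Matrix.posDef_sum ⟨1, Finset.mem_univ _⟩ fun k _ => ?_
    refine Matrix.PosDef.conjTranspose_mul_self _ (Matrix.mulVec_injective_of_isUnit ?_)
    exact (Group.isUnit k).map M
  have hinv : (M g).conjTranspose * P * M g = P := by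
    rw [hP, Finset.mul_sum, Finset.sum_mul]
    rw [← Equiv.sum_comp (Equiv.mulRight g) fun k => (M k).conjTranspose * M k]
    refine Finset.sum_congr rfl fun k _ => ?_
    simp [Matrix.conjTranspose_mul, Matrix.mul_assoc]
  have hg : M g * M g⁻¹ = 1 := by rw [← map_mul, mul_inv_cancel, map_one]
  have h1 : (M g).conjTranspose * P = P * M g⁻¹ := by
    calc (M g).conjTranspose * P = (M g).conjTranspose * P * (M g * M g⁻¹) := by
          rw [hg, mul_one]
      _ = P * M g⁻¹ := by rw [← mul_assoc, hinv]
  obtain ⟨u, hu⟩ := hPos.isUnit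
  rw [← Matrix.trace_conjTranspose]
  have h2 : M g⁻¹ = (↑u⁻¹ : Matrix n n ℂ) * ((M g).conjTranspose * P) := by
    rw [h1, ← hu, Units.inv_mul_cancel_left]
  rw [h2, Matrix.trace_mul_comm, ← hu, mul_assoc, Units.mul_inv, mul_one]

theorem character_inv_eq_conj {G : Type} [Group G] [Fintype G] (V : FDRep ℂ G) (g : G) :
    (starRingEnd ℂ) (V.character g) = V.character g⁻¹ := by
  let b := Module.finBasis ℂ V
  have h := trace_inv_eq_star_trace
    ((MonoidHomClass.toMonoidHom (LinearMap.toMatrixAlgEquiv b)).comp V.ρ) g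
  simp only [FDRep.character, LinearMap.trace_eq_matrix_trace ℂ b]
  exact h.symm

/-- Schur's lemma for an endomorphism given as a linear map. -/
theorem exists_smul_of_commute {G : Type} [Group G] (V : FDRep ℂ G) [Simple V]
    (T : V →ₗ[ℂ] V) (hT : ∀ g, T * V.ρ g = V.ρ g * T) : ∃ c : ℂ, T = c • 1 := by
  let f : V ⟶ V := ⟨InducedCategory.homMk (ModuleCat.ofHom T), fun g => by
    ext1
    simp only [FGModuleCat.obj_carrier]
    exact hT g⟩
  obtain ⟨c, hc⟩ := endomorphism_simple_eq_smul_id ℂ f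
  exact ⟨c, congrArg (fun k : V ⟶ V => k.hom.hom.hom) hc.symm⟩

theorem sum_character_mul_character_inv {G : Type} [Group G] [Fintype G]
    (V : FDRep ℂ G) [Simple V] (a : G) :
    (Fintype.card G : ℂ)⁻¹ * ∑ h : G, V.character (a * h) * V.character h⁻¹
      = V.character a / V.character 1 := by
  set T : V →ₗ[ℂ] V := ∑ h : G, V.character h⁻¹ • V.ρ h with hTdef
  have hT : ∀ g, T * V.ρ g = V.ρ g * T := by
    intro g
    rw [hTdef, Finset.sum_mul, Finset.mul_sum]
    rw [← (MulAut.conj g).toEquiv.sum_comp fun h => V.character h⁻¹ • V.ρ h * V.ρ g]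
    refine Finset.sum_congr rfl fun h _ => ?_
    have hc : V.character (g * h * g⁻¹)⁻¹ = V.character h⁻¹ := by
      rw [← V.char_conj h⁻¹ g]; congr 1; group
    change V.character (g * h * g⁻¹)⁻¹ • V.ρ (g * h * g⁻¹) * V.ρ g = _
    rw [hc, smul_mul_assoc, mul_smul_comm, ← map_mul, ← map_mul, inv_mul_cancel_right]
  obtain ⟨c, hc⟩ := exists_smul_of_commute V T hT
  have htr : ∀ a : G, ∑ h : G, V.character (a * h) * V.character h⁻¹ = c * V.character a := by
    intro a
    have h1 : LinearMap.trace ℂ V (V.ρ a * T) = c * V.character a := by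
      rw [hc]; simp [FDRep.character]
    rw [← h1, hTdef, Finset.mul_sum, map_sum]
    refine Finset.sum_congr rfl fun h _ => ?_
    simp [FDRep.character, mul_comm]
  have hcard : (Fintype.card G : ℂ) ≠ 0 := Nat.cast_ne_zero.mpr Fintype.card_ne_zero
  have : Invertible (Nat.card G : ℂ) := invertibleOfNonzero (by simp)
  have horth := FDRep.char_orthonormal V V
  rw [if_pos ⟨Iso.refl V⟩] at horth
  have h1 := htr 1
  simp only [one_mul] at h1
  rw [h1, Nat.card_eq_fintype_card] at horth
  have hd : V.character 1 ≠ 0 := by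
    intro h0; simp [h0] at horth
  rw [htr, eq_div_iff hd]
  linear_combination V.character a * horth

/-- Let `G` be a finite group, `η` a linear character of `G` and `χ` the
character of an irreducible complex representation of `G`.  For all `x, y ∈ G`,
`(1/|G|) ∑_{g∈G} χ(x⁻¹g) η(y⁻¹g) conj(χ(y⁻¹g)) η(g⁻¹) = η(y⁻¹) χ(x⁻¹y) / χ(1)`.
(This is the `η̂`-spherical function of the Gelfand triple `(G×G, ΔG, η̂)` attached to the
irreducible component `χ ⊗ (η ⊗ χ̄)`.) -/
theorem spherical_function_diagonal (G : Type) [Group G] [Fintype G]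
    (η : G →* ℂˣ) (V : FDRep ℂ G) [CategoryTheory.Simple V] (x y : G) :
    (Fintype.card G : ℂ)⁻¹ *
      ∑ g : G, V.character (x⁻¹ * g) * (η (y⁻¹ * g) : ℂ) *
        (starRingEnd ℂ) (V.character (y⁻¹ * g)) * (η g⁻¹ : ℂ)
      = (η y⁻¹ : ℂ) * V.character (x⁻¹ * y) / V.character 1 := by
  rw [mul_div_assoc, ← sum_character_mul_character_inv V (x⁻¹ * y), mul_left_comm]
  congr 1
  rw [Finset.mul_sum, ← Equiv.sum_comp (Equiv.mulLeft y)]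
  refine Finset.sum_congr rfl fun h _ => ?_
  have hη : (η h : ℂ) * (η h⁻¹ : ℂ) = 1 := by
    rw [← Units.val_mul, ← map_mul, mul_inv_cancel, map_one, Units.val_one]
  rw [Equiv.coe_mulLeft, inv_mul_cancel_left, character_inv_eq_conj, mul_inv_rev, ← mul_assoc,
    map_mul, Units.val_mul]
  linear_combination V.character (x⁻¹ * y * h) * V.character h⁻¹ * (η y⁻¹ : ℂ) * hη
end

section
/- Fix a linear character ξ of G and a linear character ε of S₂, and write ε(τ) ∈ {1,−1} for the value of ε at the transposition τ ∈ S₂. For each irreducible character χ of G define class functions on SG₂ by: T^χ((g,h),σ) = χ(g)·χ(h) if σ = 1 and T^χ((g,h),σ) = ν₂^ξ(χ)·ε(τ)·χ(gh) if σ = τ; and U^χ((g,h),σ) = χ(g)·ξ(h)·conj(χ(h)) + χ(h)·ξ(g)·conj(χ(g)) if σ = 1 and U^χ((g,h),σ) = 0 if σ = τ. Then for every s ∈ SG₂, the value of the character of SG₂ induced from ξ⊗ε on HG₁ at s, namely (1/|HG₁|)·∑_{a∈SG₂ with a⁻¹sa∈HG₁} (ξ⊗ε)(a⁻¹sa), equals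 ∑_{χ irreducible, χ = χ̄⊗ξ} T^χ(s) + (1/2)·∑_{χ irreducible, χ ≠ χ̄⊗ξ} U^χ(s). -/
/-!
Write `⟨f, χ⟩ = |G|⁻¹ ∑ f(g) conj(χ(g))`. Everything rests on the expansion `f = ∑_χ ⟨f, χ⟩ χ` of a
class function in irreducible characters (`class_expand`), together with the following computation
of the induced character.

* At `((g, h), 1)` its value is `ξ(g)` times the number of `z` with `z g z⁻¹ = h`. Column
  orthogonality (`col_orth`, the expansion of that count as a function of `h`) turns it into
  `ξ(g) ∑_χ χ(h) conj(χ(g))`, and also, since `ξ(g) = ξ(h)` when the count is nonzero, into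
  `ξ(h) ∑_χ χ(g) conj(χ(h))`. The mean of the two expressions is, character by character, the
  right-hand side: for `χ = χ̄⊗ξ` both summands equal `χ(g) χ(h)`, and for the other `χ` their sum
  is `U^χ`.
* At `((g, h), τ)` its value is `ε(τ) ∑_{u² = gh} ξ(u)`, and the twisted square-root count
  `k ↦ ∑_{u² = k} ξ(u)` has coefficients `conj(ν₂^ξ(χ))` (`sqrt_sum`). The indicator is real when
  `χ = χ̄⊗ξ` (`nu_real`) and vanishes otherwise (`nu_zero`): in that case `⟨χ², ξ⟩ = ⟨χ, χ̄⊗ξ⟩ = 0`,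
  so the projection of `V ⊗ V` to its `ξ`-isotypic part is zero, and `ν₂^ξ(χ)` is the trace of that
  projection composed with the flip of the two factors.

Row orthogonality comes from Mathlib, after `χ(g⁻¹) = conj(χ(g))` is obtained from an invariant
positive definite Hermitian form. Completeness (`class_zero`) is Schur's lemma: a class function
orthogonal to all irreducible characters gives a central element of `ℂ[G]` that acts by zero on
every simple left ideal, hence on the semisimple module `ℂ[G]`.
-/

open scoped BigOperators


/-- Every permutation of `Fin 2` is the identity or the transposition. -/
lemma perm_fin_two_cases (σ : Equiv.Perm (Fin 2)) :
    σ = 1 ∨ σ = Equiv.swap 0 1 := by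
  revert σ; decide

/-- The action of `S₂ = Equiv.Perm (Fin 2)` on `G × G` permuting the two coordinates. -/
def permProdAut (G : Type) [Group G] : Equiv.Perm (Fin 2) →* MulAut (G × G) where
  toFun σ := if σ = 1 then 1 else (MulEquiv.prodComm : G × G ≃* G × G)
  map_one' := if_pos rfl
  map_mul' σ τ := by
    have hswap : ((MulEquiv.prodComm : G × G ≃* G × G)) * ((MulEquiv.prodComm : G × G ≃* G × G)) = 1 :=
      MulEquiv.ext fun p => rfl
    have hne : Equiv.swap (0 : Fin 2) 1 ≠ 1 := by decide
    rcases perm_fin_two_cases σ with hσ | hσ <;> rcases perm_fin_two_cases τ with hτ | hτ <;>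
      subst hσ <;> subst hτ <;>
      simp [Equiv.swap_mul_self, hne, hswap]

/-- `SG₂ = G ≀ S₂`, realized as the semidirect product `(G × G) ⋊ S₂`. -/
abbrev SG2 (G : Type) [Group G] := (G × G) ⋊[permProdAut G] Equiv.Perm (Fin 2)

lemma permProdAut_diag (G : Type) [Group G] (σ : Equiv.Perm (Fin 2)) (p : G × G)
    (hp : p.1 = p.2) : (permProdAut G σ p).1 = (permProdAut G σ p).2 := by
  by_cases h : σ = 1 <;> simp [permProdAut, h, hp]

/-- `HG₁ = {((g,g),σ)} ≤ SG₂`. -/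
def HG1 (G : Type) [Group G] : Subgroup (SG2 G) where
  carrier := {x | x.left.1 = x.left.2}
  one_mem' := rfl
  mul_mem' := by
    intro a b ha hb
    simp only [Set.mem_setOf_eq] at *
    rw [SemidirectProduct.mul_left, Prod.fst_mul, Prod.snd_mul, ha,
      permProdAut_diag G a.right b.left hb]
  inv_mem' := by
    intro a ha
    simp only [Set.mem_setOf_eq] at *
    rw [SemidirectProduct.inv_left]
    exact permProdAut_diag G a.right⁻¹ a.left⁻¹ (by rw [Prod.fst_inv, Prod.snd_inv, ha])

/-- The predicate that `χ : G → ℂ` is the character of an irreducible complex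
finite-dimensional representation of `G`. -/
def IsIrredChar (G : Type) [Group G] (χ : G → ℂ) : Prop :=
  ∃ V : FDRep ℂ G, CategoryTheory.Simple V ∧ χ = V.character

/-- The twisted Frobenius–Schur indicator `ν₂^ξ(χ)`. -/
noncomputable def nuTwo (G : Type) [Group G] [Fintype G] (ξ : G →* ℂˣ) (χ : G → ℂ) : ℂ :=
  (Fintype.card G : ℂ)⁻¹ * ∑ g : G, (starRingEnd ℂ) (ξ g : ℂ) * χ (g ^ 2)

/-- The class function `T^χ` on `SG₂`: `T^χ((g,h),1) = χ(g)χ(h)` and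
`T^χ((g,h),τ) = ν₂^ξ(χ)·ε(τ)·χ(gh)`. -/
noncomputable def Tchar (G : Type) [Group G] [Fintype G] (ξ : G →* ℂˣ)
    (ε : Equiv.Perm (Fin 2) →* ℂˣ) (χ : G → ℂ) (s : SG2 G) : ℂ :=
  if s.right = 1 then χ s.left.1 * χ s.left.2
  else nuTwo G ξ χ * (ε (Equiv.swap 0 1) : ℂ) * χ (s.left.1 * s.left.2)

/-- The class function `U^χ` on `SG₂`:
`U^χ((g,h),1) = χ(g)ξ(h)conj(χ(h)) + χ(h)ξ(g)conj(χ(g))` and `U^χ((g,h),τ) = 0`. -/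
noncomputable def Uchar (G : Type) [Group G] (ξ : G →* ℂˣ) (χ : G → ℂ) (s : SG2 G) : ℂ :=
  if s.right = 1 then
    χ s.left.1 * (ξ s.left.2 : ℂ) * (starRingEnd ℂ) (χ s.left.2) +
      χ s.left.2 * (ξ s.left.1 : ℂ) * (starRingEnd ℂ) (χ s.left.1)
  else 0

/-! ### Complex conjugates of characters -/

open Matrix ComplexOrder in
/-- In a basis, `H = ∑ ρ(g)ᴴ ρ(g)` is positive definite and `ρ(h)ᴴ H ρ(h) = H`, so that `ρ(h⁻¹)` is
similar to `ρ(h)ᴴ`. -/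
lemma trace_inv_eq_conj {G : Type} [Group G] [Fintype G] {V : Type} [AddCommGroup V] [Module ℂ V]
    [FiniteDimensional ℂ V] (ρ : Representation ℂ G V) (h : G) :
    LinearMap.trace ℂ V (ρ h⁻¹) = (starRingEnd ℂ) (LinearMap.trace ℂ V (ρ h)) := by
  classical
  let b := Module.finBasis ℂ V
  let A : G → Matrix _ _ ℂ := fun g => LinearMap.toMatrix b b (ρ g)
  have hmul : ∀ g k, A (g * k) = A g * A k := fun g k => by
    simp [A, map_mul, Module.End.mul_eq_comp, LinearMap.toMatrix_comp b b b]
  have hone : A 1 = 1 := by simp [A]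
  have htr : ∀ g, LinearMap.trace ℂ V (ρ g) = (A g).trace := fun g =>
    LinearMap.trace_eq_matrix_trace ℂ b (ρ g)
  let H : Matrix _ _ ℂ := ∑ g, (A g)ᴴ * A g
  have hpos : H.PosDef := by
    have : H = (A 1)ᴴ * A 1 + ∑ g ∈ Finset.univ.erase 1, (A g)ᴴ * A g := by
      rw [Finset.add_sum_erase _ (fun g => (A g)ᴴ * A g) (Finset.mem_univ (1 : G))]
    rw [this, hone]
    refine Matrix.PosDef.add_posSemidef (by simpa using Matrix.PosDef.one) ?_
    exact Matrix.posSemidef_sum _ fun g _ => Matrix.posSemidef_conjTranspose_mul_self _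
  have hdet : IsUnit H.det := (Matrix.isUnit_iff_isUnit_det _).1 hpos.isUnit
  have hinv : (A h)ᴴ * H * A h = H := by
    simp only [H, Finset.mul_sum, Finset.sum_mul]
    rw [← Equiv.sum_comp (Equiv.mulRight h) (fun g => (A g)ᴴ * A g)]
    refine Finset.sum_congr rfl fun g _ => ?_
    simp [hmul, Matrix.mul_assoc]
  have hA : A h * A h⁻¹ = 1 := by rw [← hmul, mul_inv_cancel, hone]
  have key : A h⁻¹ = H⁻¹ * ((A h)ᴴ * H) := by
    have : H * A h⁻¹ = (A h)ᴴ * H := by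
      conv_lhs => rw [← hinv]
      rw [Matrix.mul_assoc, hA, Matrix.mul_one]
    rw [← this, Matrix.nonsing_inv_mul_cancel_left _ _ hdet]
  rw [htr, htr, key, Matrix.trace_mul_comm, Matrix.mul_assoc, Matrix.mul_nonsing_inv _ hdet,
    Matrix.mul_one, Matrix.trace_conjTranspose]
  rfl

lemma conj_lin {G : Type} [Group G] [Fintype G] (ξ : G →* ℂˣ) (g : G) :
    (starRingEnd ℂ) (ξ g : ℂ) = (ξ g : ℂ)⁻¹ := by
  have h : (ξ g : ℂ) ^ Fintype.card G = 1 := by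
    rw [← Units.val_pow_eq_pow_val, ← map_pow, pow_card_eq_one]; simp
  have hn : ‖(ξ g : ℂ)‖ = 1 := Complex.norm_eq_one_of_pow_eq_one h Fintype.card_ne_zero
  exact (Complex.inv_eq_conj hn).symm

/-! ### Irreducible characters: orthogonality and twists -/

lemma irr_inv {G : Type} [Group G] [Fintype G] {χ : G → ℂ} (h : IsIrredChar G χ) (g : G) :
    χ g⁻¹ = (starRingEnd ℂ) (χ g) := by
  obtain ⟨V, -, rfl⟩ := h
  exact trace_inv_eq_conj V.ρ g

lemma irr_conj {G : Type} [Group G] {χ : G → ℂ} (h : IsIrredChar G χ) (g k : G) :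
    χ (k * g * k⁻¹) = χ g := by
  obtain ⟨V, -, rfl⟩ := h
  exact V.char_conj g k

lemma irr_norm {G : Type} [Group G] [Fintype G] {χ : G → ℂ} (h : IsIrredChar G χ) :
    ∑ g, χ g * (starRingEnd ℂ) (χ g) = Fintype.card G := by
  have h' := h
  obtain ⟨V, hV, rfl⟩ := h
  have := (FDRep.simple_iff_char_is_norm_one V).1 hV
  simpa [irr_inv h'] using this

lemma irr_orth {G : Type} [Group G] [Fintype G] {χ ψ : G → ℂ} (h : IsIrredChar G χ)
    (h2 : IsIrredChar G ψ) (hne : χ ≠ ψ) :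
    ∑ g, χ g * (starRingEnd ℂ) (ψ g) = 0 := by
  have h2' := h2
  obtain ⟨V, hV, rfl⟩ := h
  obtain ⟨W, hW, rfl⟩ := h2
  have := invertibleOfNonzero (NeZero.ne (Nat.card G : ℂ))
  have hiso : ¬ Nonempty (V ≅ W) := fun ⟨i⟩ => hne (FDRep.char_iso i)
  have := FDRep.char_orthonormal V W
  rw [if_neg hiso] at this
  simpa [irr_inv h2'] using this

/-- `χ̄⊗ξ` is afforded by the dual representation scaled by `ξ`; it is irreducible because its
character has norm one. -/
lemma irr_twist {G : Type} [Group G] [Fintype G] (ξ : G →* ℂˣ) {χ : G → ℂ}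
    (h : IsIrredChar G χ) : IsIrredChar G (fun g => (starRingEnd ℂ) (χ g) * (ξ g : ℂ)) := by
  have h' := h
  obtain ⟨V, hV, rfl⟩ := h
  let σ : Representation ℂ G (Module.Dual ℂ V) :=
    { toFun := fun g => (ξ g : ℂ) • Representation.dual V.ρ g
      map_one' := by rw [map_one, map_one, Units.val_one, one_smul]
      map_mul' := fun a b => by
        rw [map_mul, map_mul, Units.val_mul, smul_mul_smul_comm] }
  have hchar : (fun g => (starRingEnd ℂ) (V.character g) * (ξ g : ℂ)) = (FDRep.of σ).character := by
    funext g
    have : (FDRep.of σ).character g = (ξ g : ℂ) * (FDRep.of (Representation.dual V.ρ)).character g := by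
      change LinearMap.trace ℂ _ ((ξ g : ℂ) • Representation.dual V.ρ g) = _
      rw [map_smul]; rfl
    rw [this, FDRep.char_dual, irr_inv h', mul_comm]
  refine ⟨FDRep.of σ, ?_, hchar⟩
  rw [FDRep.simple_iff_char_is_norm_one, ← hchar, Nat.card_eq_fintype_card, ← irr_norm h']
  refine Finset.sum_congr rfl fun g _ => ?_
  have := (ξ g).ne_zero
  simp only [irr_inv h', map_inv, Complex.conj_conj, Units.val_inv_eq_inv_val]
  field_simp

/-! ### The twisted Frobenius–Schur indicator -/

/-- Contracting `A ⊗ B` against the flip recovers the trace of the composite. -/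
lemma trace_comm_comp_map {V : Type} [AddCommGroup V] [Module ℂ V] [FiniteDimensional ℂ V]
    (A B : V →ₗ[ℂ] V) :
    LinearMap.trace ℂ _ ((TensorProduct.comm ℂ V V).toLinearMap ∘ₗ TensorProduct.map A B) =
      LinearMap.trace ℂ V (A * B) := by
  classical
  let b := Module.finBasis ℂ V
  rw [LinearMap.trace_eq_matrix_trace ℂ (b.tensorProduct b), LinearMap.trace_eq_matrix_trace ℂ b,
    Module.End.mul_eq_comp, LinearMap.toMatrix_comp b b b]
  simp only [Matrix.trace, Matrix.diag, Fintype.sum_prod_type, Matrix.mul_apply]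
  rw [Finset.sum_comm]
  refine Finset.sum_congr rfl fun i _ => Finset.sum_congr rfl fun j _ => ?_
  simp [LinearMap.toMatrix_apply]

/-- The twisted indicator vanishes off the self-dual case: the average of `ξ(g)⁻¹ ρ(g) ⊗ ρ(g)` is a
projection of trace `⟨χ, χ̄⊗ξ⟩ = 0`, hence is zero. -/
lemma nu_zero {G : Type} [Group G] [Fintype G] (ξ : G →* ℂˣ) {χ : G → ℂ}
    (h : IsIrredChar G χ) (hne : ¬ ∀ g : G, χ g = (starRingEnd ℂ) (χ g) * (ξ g : ℂ)) :
    nuTwo G ξ χ = 0 := by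
  have ho := irr_orth h (irr_twist ξ h) (fun hh => hne fun g => congrFun hh g)
  obtain ⟨V, hV, rfl⟩ := h
  let σ : Representation ℂ G (TensorProduct ℂ V V) :=
    { toFun := fun g => (ξ g : ℂ)⁻¹ • TensorProduct.map (V.ρ g) (V.ρ g)
      map_one' := by simp
      map_mul' := fun a b => by
        simp [smul_smul, mul_comm, TensorProduct.map_mul] }
  have := invertibleOfNonzero (NeZero.ne (Nat.card G : ℂ))
  have := invertibleOfNonzero (NeZero.ne (Fintype.card G : ℂ))
  have hc : ∀ g, σ.character g = V.character g *
      (starRingEnd ℂ) ((starRingEnd ℂ) (V.character g) * (ξ g : ℂ)) := by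
    intro g
    have : σ.character g = (ξ g : ℂ)⁻¹ * (V.character g * V.character g) := by
      change LinearMap.trace ℂ _ ((ξ g : ℂ)⁻¹ • TensorProduct.map (V.ρ g) (V.ρ g)) = _
      rw [map_smul, LinearMap.trace_tensorProduct']; rfl
    rw [this, map_mul, conj_lin]; simp; ring
  have hfin := Representation.card_inv_mul_sum_char_eq_finrank σ
  simp only [hc, ho, mul_zero] at hfin
  have hfin' : Module.finrank ℂ σ.invariants = 0 := by exact_mod_cast hfin.symm
  have hbot : σ.invariants = ⊥ := Submodule.finrank_eq_zero.1 hfin'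
  have havg : σ.averageMap = 0 := by
    ext1; ext v w
    have := (Representation.isProj_averageMap σ).map_mem (v ⊗ₜ w)
    rw [hbot] at this
    simpa using this
  have hsum : ∑ g, (ξ g : ℂ)⁻¹ • TensorProduct.map (V.ρ g) (V.ρ g) = 0 := by
    have h1 : σ.averageMap = (⅟(Fintype.card G : ℂ)) • ∑ g, σ g := by
      simp [Representation.averageMap, GroupAlgebra.average]
    rw [h1] at havg
    exact (smul_eq_zero.1 havg).resolve_left (by simp)
  let C : Module.End ℂ (TensorProduct ℂ V V) := (TensorProduct.comm ℂ V V).toLinearMap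
  have hC : ∀ A B : V →ₗ[ℂ] V, LinearMap.trace ℂ _ (C * TensorProduct.map A B) =
      LinearMap.trace ℂ V (A * B) := trace_comm_comp_map
  have := congrArg (fun T : Module.End ℂ (TensorProduct ℂ V V) => LinearMap.trace ℂ _ (C * T)) hsum
  simp only [Finset.mul_sum, mul_smul_comm, map_sum, map_smul, hC, mul_zero, map_zero] at this
  rw [nuTwo, mul_eq_zero]; right
  rw [← this]
  refine Finset.sum_congr rfl fun g _ => ?_
  rw [conj_lin, pow_two, FDRep.character, map_mul]; rfl

/-- For `χ = χ̄⊗ξ` each summand of `ν₂^ξ(χ)` is already real. -/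
lemma nu_real {G : Type} [Group G] [Fintype G] (ξ : G →* ℂˣ) {χ : G → ℂ}
    (hself : ∀ g : G, χ g = (starRingEnd ℂ) (χ g) * (ξ g : ℂ)) :
    (starRingEnd ℂ) (nuTwo G ξ χ) = nuTwo G ξ χ := by
  simp only [nuTwo, map_mul, map_sum, map_inv₀, map_natCast, Complex.conj_conj]
  congr 1
  refine Finset.sum_congr rfl fun g _ => ?_
  conv_rhs => rw [hself (g ^ 2)]
  rw [conj_lin, map_pow, Units.val_pow_eq_pow_val]
  have := (ξ g).ne_zero
  field_simp

/-! ### Completeness of the irreducible characters -/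

open scoped MonoidAlgebra in
/-- The character of a simple left ideal of `ℂ[G]` is irreducible in the sense of `IsIrredChar`. -/
lemma isIrredChar_of_simple {G : Type} [Group G] [Fintype G] (S : Submodule ℂ[G] ℂ[G])
    (hS : IsSimpleModule ℂ[G] S) :
    IsIrredChar G (fun g => LinearMap.trace ℂ S (Algebra.lsmul ℂ ℂ S (MonoidAlgebra.of ℂ G g))) := by
  have : FiniteDimensional ℂ S :=
    FiniteDimensional.finiteDimensional_submodule (S.restrictScalars ℂ)
  let ρ : Representation ℂ G S :=
    ((Algebra.lsmul ℂ ℂ S : ℂ[G] →ₐ[ℂ] Module.End ℂ S) : ℂ[G] →* Module.End ℂ S).comp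
      (MonoidAlgebra.of ℂ G)
  have hρ : ∀ g (x : S), ρ g x = MonoidAlgebra.of ℂ G g • x := fun g x => rfl
  have hirr : ρ.IsIrreducible := by
    let e : ρ.asModule ≃ₗ[ℂ[G]] S :=
      { ρ.asModuleEquiv with
        map_smul' := fun r x => by
          induction r using MonoidAlgebra.induction_linear with
          | zero => simp
          | add f g hf hg =>
            simp only [add_smul, RingHom.id_apply] at *
            rw [← hf, ← hg]
            exact map_add ρ.asModuleEquiv _ _
          | single g c =>
            change ρ.asModuleEquiv (MonoidAlgebra.single g c • x) =
              MonoidAlgebra.single g c • ρ.asModuleEquiv x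
            rw [Representation.asModuleEquiv_map_smul, Representation.asAlgebraHom_single,
              LinearMap.smul_apply, hρ, MonoidAlgebra.of_apply, ← smul_assoc]
            simp }
    rw [Representation.irreducible_iff_isSimpleModule_asModule]
    exact IsSimpleModule.congr e
  refine ⟨FDRep.of ρ, ?_, rfl⟩
  have := invertibleOfNonzero (NeZero.ne (Nat.card G : ℂ))
  rw [FDRep.simple_iff_char_is_norm_one]
  have h := Representation.char_orthonormal ρ ρ
  rw [if_pos ⟨Representation.Equiv.refl ρ⟩, inv_mul_eq_one₀ (NeZero.ne _)] at h
  exact h.symm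

open scoped MonoidAlgebra in
/-- A class function orthogonal to all irreducible characters is zero. -/
lemma class_zero {G : Type} [Group G] [Fintype G] (f : G → ℂ)
    (hf : ∀ g k, f (k * g * k⁻¹) = f g)
    (h0 : ∀ χ, IsIrredChar G χ → ∑ g, f g * (starRingEnd ℂ) (χ g) = 0) : f = 0 := by
  classical
  -- The inverse makes the trace of `z` on a simple ideal the inner product with its character.
  let z : ℂ[G] := ∑ g, MonoidAlgebra.single g (f g⁻¹)
  have hzc : ∀ k : G, z * MonoidAlgebra.of ℂ G k = MonoidAlgebra.of ℂ G k * z := by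
    intro k
    simp only [z, Finset.sum_mul, Finset.mul_sum, MonoidAlgebra.of_apply,
      MonoidAlgebra.single_mul_single, mul_one, one_mul]
    rw [← Equiv.sum_comp (MulAut.conj k).toEquiv]
    refine Finset.sum_congr rfl fun g _ => ?_
    have : (k * g * k⁻¹)⁻¹ = k * g⁻¹ * k⁻¹ := by group
    simp [this, hf, -mul_inv_rev]
  have hz : ∀ r : ℂ[G], z * r = r * z := by
    intro r
    induction r using MonoidAlgebra.induction_linear with
    | zero => simp
    | add a b ha hb => rw [mul_add, add_mul, ha, hb]
    | single g c =>
      have : MonoidAlgebra.single g c = c • MonoidAlgebra.of ℂ G g := by simp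
      rw [this, mul_smul_comm, smul_mul_assoc, hzc]
  -- The annihilator of the central element `z` is a left ideal; it contains every simple one.
  let K : Submodule ℂ[G] ℂ[G] :=
    { carrier := {x | z * x = 0}
      zero_mem' := by simp
      add_mem' := fun {a b} ha hb => by
        simp only [Set.mem_ofPred_eq] at *; rw [mul_add, ha, hb, add_zero]
      smul_mem' := fun c x hx => by
        simp only [Set.mem_ofPred_eq, smul_eq_mul] at *
        rw [← mul_assoc, hz, mul_assoc, hx, mul_zero] }
  have hK : K = ⊤ := by
    rw [eq_top_iff, ← IsSemisimpleModule.sSup_simples_eq_top ℂ[G] ℂ[G]]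
    refine sSup_le fun S hS => ?_
    have hS' : IsSimpleModule ℂ[G] S := hS
    have : FiniteDimensional ℂ S :=
      FiniteDimensional.finiteDimensional_submodule (S.restrictScalars ℂ)
    let T : Module.End ℂ[G] S :=
      { toFun := fun x => z • x
        map_add' := smul_add z
        map_smul' := fun r x => by simp only [RingHom.id_apply, smul_smul, hz] }
    obtain ⟨c, hc⟩ := (IsSimpleModule.algebraMap_end_bijective_of_isAlgClosed ℂ
      (A := ℂ[G]) (V := S)).2 T
    have hcx : ∀ x : S, z • x = c • x := fun x => by
      have := congrArg (fun F => F x) hc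
      simpa [T] using this.symm
    have hirr := isIrredChar_of_simple S hS'
    have htr : LinearMap.trace ℂ S (Algebra.lsmul ℂ ℂ S z) = 0 := by
      have h1 : Algebra.lsmul ℂ ℂ S z =
          ∑ g, f g⁻¹ • Algebra.lsmul ℂ ℂ S (MonoidAlgebra.of ℂ G g) := by
        simp only [z, map_sum, ← map_smul]
        refine Finset.sum_congr rfl fun g _ => ?_
        simp
      rw [h1, map_sum, ← h0 _ hirr, ← Equiv.sum_comp (Equiv.inv G)]
      refine Finset.sum_congr rfl fun g _ => ?_
      rw [map_smul, ← irr_inv hirr]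
      simp
    have htr2 : LinearMap.trace ℂ S (Algebra.lsmul ℂ ℂ S z) = c * Module.finrank ℂ S := by
      have : Algebra.lsmul ℂ ℂ S z = c • (LinearMap.id : S →ₗ[ℂ] S) := by
        ext1 x; simpa using hcx x
      rw [this, map_smul, LinearMap.trace_id, smul_eq_mul]
    have : Nontrivial S := IsSimpleModule.nontrivial ℂ[G] S
    have hc0 : c = 0 := by
      rw [htr2] at htr
      exact (mul_eq_zero.1 htr).resolve_right (by exact_mod_cast Module.finrank_pos.ne')
    intro x hx
    have := congrArg Subtype.val (hcx ⟨x, hx⟩)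
    change z * x = 0
    simpa [hc0] using this
  have hz0 : z = 0 := by
    have : (1 : ℂ[G]) ∈ K := by rw [hK]; trivial
    simpa [K] using this
  funext g
  have := congrArg (fun r : ℂ[G] => r.coeff g⁻¹) hz0
  simpa [z, Finsupp.single_apply] using this

lemma irr_li {G : Type} [Group G] [Fintype G] :
    LinearIndependent ℂ (fun χ : {χ : G → ℂ // IsIrredChar G χ} => χ.val) := by
  classical
  rw [linearIndependent_iff']
  intro s c hs j hj
  have h1 : ∑ g, (∑ i ∈ s, c i • i.val) g * (starRingEnd ℂ) (j.val g) = 0 := by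
    rw [hs]; simp
  simp only [Finset.sum_apply, Finset.sum_mul, Pi.smul_apply, smul_eq_mul, mul_assoc] at h1
  rw [Finset.sum_comm] at h1
  simp only [← Finset.mul_sum] at h1
  rw [Finset.sum_eq_single_of_mem j hj] at h1
  · rw [irr_norm j.2] at h1
    exact (mul_eq_zero.1 h1).resolve_right (NeZero.ne _)
  · intro b _ hb
    rw [irr_orth b.2 j.2 (fun h => hb (Subtype.ext h)), mul_zero]

lemma irr_finite (G : Type) [Group G] [Fintype G] : {χ : G → ℂ | IsIrredChar G χ}.Finite := by
  have := (irr_li (G := G)).finite_of_isNoetherian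
  exact Set.finite_coe_iff.1 this

/-- The irreducible characters of `G` as a `Finset`. -/
noncomputable def irrFinset (G : Type) [Group G] [Fintype G] : Finset (G → ℂ) :=
  (irr_finite G).toFinset

lemma mem_irrFinset {G : Type} [Group G] [Fintype G] {χ : G → ℂ} :
    χ ∈ irrFinset G ↔ IsIrredChar G χ := by simp [irrFinset]

lemma class_expand {G : Type} [Group G] [Fintype G] (f : G → ℂ)
    (hf : ∀ g k, f (k * g * k⁻¹) = f g) (k : G) :
    f k = ∑ χ ∈ irrFinset G,
      ((Fintype.card G : ℂ)⁻¹ * ∑ g, f g * (starRingEnd ℂ) (χ g)) * χ k := by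
  classical
  let a : (G → ℂ) → ℂ := fun χ => (Fintype.card G : ℂ)⁻¹ * ∑ g, f g * (starRingEnd ℂ) (χ g)
  have := class_zero (fun k => f k - ∑ χ ∈ irrFinset G, a χ * χ k) ?_ ?_
  · exact sub_eq_zero.1 (congrFun this k)
  · intro g k
    simp only [hf]
    congr 1
    exact Finset.sum_congr rfl fun χ hχ => by rw [irr_conj (mem_irrFinset.1 hχ)]
  · intro ψ hψ
    simp only [sub_mul, Finset.sum_sub_distrib, Finset.sum_mul, mul_assoc]
    rw [Finset.sum_comm]
    simp only [← Finset.mul_sum]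
    rw [Finset.sum_eq_single_of_mem ψ (mem_irrFinset.2 hψ), irr_norm hψ]
    · have : (Fintype.card G : ℂ) ≠ 0 := NeZero.ne _
      simp only [a]; field_simp; simp
    · intro b hb hne
      rw [irr_orth (mem_irrFinset.1 hb) hψ hne, mul_zero]

/-! ### Two class functions and their coefficients -/

/-- Column orthogonality. -/
lemma col_orth {G : Type} [Group G] [Fintype G] [DecidableEq G] (g h : G) :
    ∑ z : G, (if z * g * z⁻¹ = h then (1 : ℂ) else 0) =
      ∑ χ ∈ irrFinset G, χ h * (starRingEnd ℂ) (χ g) := by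
  have hcard : (Fintype.card G : ℂ) ≠ 0 := NeZero.ne _
  have := class_expand (fun k => ∑ z : G, (if z * g * z⁻¹ = k then (1 : ℂ) else 0)) ?_ h
  · rw [this]
    refine Finset.sum_congr rfl fun χ hχ => ?_
    have hsum : ∑ k, (∑ z : G, (if z * g * z⁻¹ = k then (1 : ℂ) else 0)) * (starRingEnd ℂ) (χ k) =
        Fintype.card G * (starRingEnd ℂ) (χ g) := by
      simp only [Finset.sum_mul]
      rw [Finset.sum_comm]
      simp [irr_conj (mem_irrFinset.1 hχ)]
    rw [hsum]; field_simp
  · intro k w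
    rw [← Equiv.sum_comp (Equiv.mulLeft w)]
    refine Finset.sum_congr rfl fun z _ => ?_
    have : w * z * g * (w * z)⁻¹ = w * k * w⁻¹ ↔ z * g * z⁻¹ = k := by
      have e : w * z * g * (w * z)⁻¹ = w * (z * g * z⁻¹) * w⁻¹ := by group
      rw [e, mul_left_inj, mul_right_inj]
    simp only [Equiv.coe_mulLeft, this]

/-- The `ξ`-weighted count of square roots of `k`, in terms of twisted indicators. -/
lemma sqrt_sum {G : Type} [Group G] [Fintype G] [DecidableEq G] (ξ : G →* ℂˣ) (k : G) :
    ∑ u : G, (if u ^ 2 = k then (ξ u : ℂ) else 0) =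
      ∑ χ ∈ irrFinset G, (starRingEnd ℂ) (nuTwo G ξ χ) * χ k := by
  rw [class_expand (fun k => ∑ u : G, (if u ^ 2 = k then (ξ u : ℂ) else 0)) ?_ k]
  · refine Finset.sum_congr rfl fun χ hχ => ?_
    congr 1
    simp only [nuTwo, map_mul, map_sum, map_inv₀, map_natCast, Complex.conj_conj]
    simp only [Finset.sum_mul]
    rw [Finset.sum_comm]
    simp
  · intro k w
    rw [← Equiv.sum_comp (MulAut.conj w).toEquiv]
    refine Finset.sum_congr rfl fun z _ => ?_
    simp

/-! ### The induced character -/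

/-- The summand at `a` in the value at `s` of the character induced from `ξ⊗ε`. -/
noncomputable def indTerm (G : Type) [Group G] (ξ : G →* ℂˣ) (ε : Equiv.Perm (Fin 2) →* ℂˣ)
    (s a : SG2 G) : ℂ :=
  Set.indicator (HG1 G : Set (SG2 G))
            (fun x => (ξ x.left.1 : ℂ) * (ε x.right : ℂ)) (a⁻¹ * s * a)

lemma mem_HG1 {G : Type} [Group G] (x : SG2 G) : x ∈ HG1 G ↔ x.left.1 = x.left.2 := Iff.rfl

lemma permProdAut_swap (G : Type) [Group G] (p : G × G) :
    permProdAut G (Equiv.swap 0 1) p = (p.2, p.1) := by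
  have hne : Equiv.swap (0 : Fin 2) 1 ≠ 1 := by decide
  simp [permProdAut, hne, Prod.swap]

lemma indTerm_one {G : Type} [Group G] [DecidableEq G] (ξ : G →* ℂˣ)
    (ε : Equiv.Perm (Fin 2) →* ℂˣ) (g h x y : G) (σ : Equiv.Perm (Fin 2)) :
    indTerm G ξ ε ⟨(g, h), 1⟩ ⟨(x, y), σ⟩ =
      if (y * x⁻¹) * g * (y * x⁻¹)⁻¹ = h then (ξ g : ℂ) else 0 := by
  have hiff : (y * x⁻¹) * g * (y * x⁻¹)⁻¹ = h ↔ x⁻¹ * g * x = y⁻¹ * h * y := by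
    constructor
    · rintro rfl; group
    · intro e
      have : h = y * (x⁻¹ * g * x) * y⁻¹ := by rw [e]; group
      rw [this]; group
  classical
  rcases perm_fin_two_cases σ with rfl | rfl
  · rw [indTerm, Set.indicator_apply, SetLike.mem_coe, mem_HG1]
    simp only [SemidirectProduct.mul_left, SemidirectProduct.mul_right, SemidirectProduct.inv_left,
      SemidirectProduct.inv_right, inv_one, map_one, MulAut.one_apply, Prod.fst_mul, Prod.snd_mul,
      Prod.fst_inv, Prod.snd_inv, mul_one, hiff]
    refine if_congr Iff.rfl ?_ rfl
    simp [mul_comm]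
  · rw [indTerm, Set.indicator_apply, SetLike.mem_coe, mem_HG1]
    simp only [SemidirectProduct.mul_left, SemidirectProduct.mul_right, SemidirectProduct.inv_left,
      SemidirectProduct.inv_right, Equiv.swap_inv, permProdAut_swap, Prod.fst_mul, Prod.snd_mul,
      Prod.fst_inv, Prod.snd_inv, mul_one, hiff]
    refine ite_congr (propext eq_comm) (fun e => ?_) fun _ => rfl
    rw [← e]
    simp [mul_comm]

lemma indTerm_swap {G : Type} [Group G] [DecidableEq G] (ξ : G →* ℂˣ)
    (ε : Equiv.Perm (Fin 2) →* ℂˣ) (g h x y : G) (σ : Equiv.Perm (Fin 2)) :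
    indTerm G ξ ε ⟨(g, h), Equiv.swap 0 1⟩ ⟨(x, y), σ⟩ =
      (ε (Equiv.swap 0 1) : ℂ) *
        if (g * y * x⁻¹) ^ 2 = g * h then (ξ (g * y * x⁻¹) : ℂ) else 0 := by
  have hiff : (g * y * x⁻¹) ^ 2 = g * h ↔ x⁻¹ * g * y = y⁻¹ * h * x := by
    constructor
    · intro e
      have : h = g⁻¹ * (g * y * x⁻¹) ^ 2 := by rw [e]; group
      rw [this, pow_two]; group
    · intro e
      have : h = y * (x⁻¹ * g * y) * x⁻¹ := by rw [e]; group
      rw [this, pow_two]; group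
  classical
  rw [mul_ite, mul_zero]
  rcases perm_fin_two_cases σ with rfl | rfl
  · rw [indTerm, Set.indicator_apply, SetLike.mem_coe, mem_HG1]
    simp only [SemidirectProduct.mul_left, SemidirectProduct.mul_right, SemidirectProduct.inv_left,
      SemidirectProduct.inv_right, inv_one, map_one, MulAut.one_apply, Prod.fst_mul, Prod.snd_mul,
      Prod.fst_inv, Prod.snd_inv, mul_one, one_mul, permProdAut_swap, hiff]
    refine if_congr Iff.rfl ?_ rfl
    simp only [map_mul, Units.val_mul]; ring
  · rw [indTerm, Set.indicator_apply, SetLike.mem_coe, mem_HG1]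
    simp only [SemidirectProduct.mul_left, SemidirectProduct.mul_right, SemidirectProduct.inv_left,
      SemidirectProduct.inv_right, Equiv.swap_inv, permProdAut_swap, Prod.fst_mul, Prod.snd_mul,
      Prod.fst_inv, Prod.snd_inv, hiff, Equiv.swap_mul_self, map_one, MulAut.one_apply,
      one_mul]
    refine ite_congr (propext eq_comm) (fun e => ?_) fun _ => rfl
    rw [← e]
    simp only [map_mul, Units.val_mul]; ring

lemma card_HG1 (G : Type) [Group G] [Fintype G] :
    (Nat.card (HG1 G) : ℂ) = 2 * Fintype.card G := by
  let e : HG1 G ≃ G × Equiv.Perm (Fin 2) :=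
    { toFun := fun x => (x.1.left.1, x.1.right)
      invFun := fun p => ⟨⟨(p.1, p.1), p.2⟩, rfl⟩
      left_inv := fun ⟨⟨⟨a, b⟩, σ⟩, hx⟩ => by
        have : a = b := hx
        subst this; rfl
      right_inv := fun p => rfl }
  rw [Nat.card_congr e, Nat.card_prod, Nat.card_eq_fintype_card, Nat.card_eq_fintype_card,
    Fintype.card_perm]
  simp [mul_comm]

/-- If the summand at `((x, y), σ)` does not depend on `σ` and its sum over `y` is `c` for every `x`,
then the normalized sum is `2|G| c / |HG₁| = c`. -/
lemma ind_eq (G : Type) [Group G] [Fintype G] (F : SG2 G → ℂ) (f : G → G → ℂ) (c : ℂ)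
    (hF : ∀ x y σ, F ⟨(x, y), σ⟩ = f x y) (hf : ∀ x, ∑ y, f x y = c) :
    (Nat.card (HG1 G) : ℂ)⁻¹ * ∑ᶠ a : SG2 G, F a = c := by
  rw [← finsum_comp_equiv (SemidirectProduct.equivProd (φ := permProdAut G)).symm,
    finsum_eq_sum_of_fintype, card_HG1]
  simp only [Fintype.sum_prod_type]
  have : ∀ x y σ, F ((SemidirectProduct.equivProd (φ := permProdAut G)).symm ((x, y), σ)) = f x y :=
    hF
  simp only [this, Finset.sum_const, Finset.card_univ, Fintype.card_perm, Fintype.card_fin,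
    ← Finset.smul_sum, hf]
  have hcard : (Fintype.card G : ℂ) ≠ 0 := NeZero.ne _
  simp; field_simp

lemma finsum_irr {G : Type} [Group G] [Fintype G] (P : (G → ℂ) → Prop) [DecidablePred P]
    (F : (G → ℂ) → ℂ) :
    ∑ᶠ χ : {χ : G → ℂ // IsIrredChar G χ ∧ P χ}, F χ.val =
      ∑ χ ∈ irrFinset G, if P χ then F χ else 0 := by
  rw [finsum_subtype_eq_finsum_cond (f := F) (fun χ => IsIrredChar G χ ∧ P χ), ← Finset.sum_filter,
    ← finsum_mem_coe_finset]
  simp [mem_irrFinset]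

/-- The decomposition of the character of `SG₂` induced from the linear
character `ξ⊗ε` of `HG₁`: for every `s ∈ SG₂`,
`(1/|HG₁|) ∑_{a ∈ SG₂, a⁻¹sa ∈ HG₁} (ξ⊗ε)(a⁻¹sa)
   = ∑_{χ = χ̄⊗ξ} T^χ(s) + (1/2) ∑_{χ ≠ χ̄⊗ξ} U^χ(s)`,
the sums running over irreducible characters `χ` of `G`. -/
theorem induced_character_decomposition (G : Type) [Group G] [Fintype G]
    (ξ : G →* ℂˣ) (ε : Equiv.Perm (Fin 2) →* ℂˣ) (s : SG2 G) :
    (Nat.card (HG1 G) : ℂ)⁻¹ *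
        ∑ᶠ a : SG2 G,
          Set.indicator (HG1 G : Set (SG2 G))
            (fun x => (ξ x.left.1 : ℂ) * (ε x.right : ℂ)) (a⁻¹ * s * a)
      = (∑ᶠ χ : {χ : G → ℂ // IsIrredChar G χ ∧
            ∀ g : G, χ g = (starRingEnd ℂ) (χ g) * (ξ g : ℂ)}, Tchar G ξ ε χ.val s)
        + (1 / 2) *
          ∑ᶠ χ : {χ : G → ℂ // IsIrredChar G χ ∧
            ¬ ∀ g : G, χ g = (starRingEnd ℂ) (χ g) * (ξ g : ℂ)}, Uchar G ξ χ.val s := by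
  classical
  rw [finsum_irr (fun χ => ∀ g : G, χ g = (starRingEnd ℂ) (χ g) * (ξ g : ℂ))
      (fun χ => Tchar G ξ ε χ s),
    finsum_irr (fun χ => ¬ ∀ g : G, χ g = (starRingEnd ℂ) (χ g) * (ξ g : ℂ))
      (fun χ => Uchar G ξ χ s), Finset.mul_sum, ← Finset.sum_add_distrib]
  obtain ⟨⟨g, h⟩, σ⟩ := s
  rcases perm_fin_two_cases σ with rfl | rfl
  · refine ind_eq G _ (fun x y => if (y * x⁻¹) * g * (y * x⁻¹)⁻¹ = h then (ξ g : ℂ) else 0) _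
      (fun x y σ => indTerm_one ξ ε g h x y σ) fun x => ?_
    refine (Equiv.sum_comp (Equiv.mulRight x⁻¹)
      (fun z => if z * g * z⁻¹ = h then (ξ g : ℂ) else 0)).trans ?_
    have h1 : ∑ z : G, (if z * g * z⁻¹ = h then (ξ g : ℂ) else 0) =
        (ξ g : ℂ) * ∑ χ ∈ irrFinset G, χ h * (starRingEnd ℂ) (χ g) := by
      rw [← col_orth, Finset.mul_sum]; simp
    have h2 : ∑ z : G, (if z * g * z⁻¹ = h then (ξ g : ℂ) else 0) =
        (ξ h : ℂ) * ∑ χ ∈ irrFinset G, χ g * (starRingEnd ℂ) (χ h) := by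
      rw [← col_orth, Finset.mul_sum, ← Equiv.sum_comp (Equiv.inv G)]
      refine Finset.sum_congr rfl fun z _ => ?_
      have : z⁻¹ * g * z = h ↔ z * h * z⁻¹ = g := by
        constructor <;> rintro rfl <;> group
      simp only [Equiv.inv_apply, inv_inv, this, mul_ite, mul_one, mul_zero]
      refine ite_congr rfl (fun e => ?_) fun _ => rfl
      rw [← e]; simp [mul_comm]
    -- Averaging `h1` and `h2` makes the identity hold character by character.
    have h3 : ∑ z : G, (if z * g * z⁻¹ = h then (ξ g : ℂ) else 0) =
        (1 / 2) * ((ξ h : ℂ) * ∑ χ ∈ irrFinset G, χ g * (starRingEnd ℂ) (χ h) +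
          (ξ g : ℂ) * ∑ χ ∈ irrFinset G, χ h * (starRingEnd ℂ) (χ g)) := by
      rw [← h1, ← h2]; ring
    rw [h3, Finset.mul_sum, Finset.mul_sum, ← Finset.sum_add_distrib, Finset.mul_sum]
    refine Finset.sum_congr rfl fun χ _ => ?_
    by_cases hs : ∀ g : G, χ g = (starRingEnd ℂ) (χ g) * (ξ g : ℂ)
    · rw [if_pos hs, if_neg (not_not.2 hs)]
      simp only [Tchar, if_true]
      linear_combination (- χ g / 2) * hs h - (χ h / 2) * hs g
    · rw [if_neg hs, if_pos hs]
      simp only [Uchar, if_true]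
      ring
  · have hne : Equiv.swap (0 : Fin 2) 1 ≠ 1 := by decide
    refine ind_eq G _ (fun x y => (ε (Equiv.swap 0 1) : ℂ) *
        if (g * y * x⁻¹) ^ 2 = g * h then (ξ (g * y * x⁻¹) : ℂ) else 0) _
      (fun x y σ => indTerm_swap ξ ε g h x y σ) fun x => ?_
    rw [← Finset.mul_sum]
    refine (congrArg _ (Equiv.sum_comp ((Equiv.mulLeft g).trans (Equiv.mulRight x⁻¹))
      (fun u => if u ^ 2 = g * h then (ξ u : ℂ) else 0))).trans ?_
    rw [sqrt_sum, Finset.mul_sum]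
    refine Finset.sum_congr rfl fun χ hχ => ?_
    by_cases hs : ∀ g : G, χ g = (starRingEnd ℂ) (χ g) * (ξ g : ℂ)
    · rw [if_pos hs, if_neg (not_not.2 hs), nu_real ξ hs]
      simp only [Tchar, if_neg hne]
      ring
    · rw [if_neg hs, if_pos hs, nu_zero ξ (mem_irrFinset.1 hχ) hs]
      simp [Uchar, hne]
end
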